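/- arXiv:1904.07713 — 2 statements merged into one kernel-verified Lean document; each statement's English description precedes it below -/
import Mathlib

section
/- Let n ≥ 1, 0 < a < 1 and b = √(1 − a²). Let u : ℝⁿ → ℝ be a C² function with D²u(x) > −(a+b)I for every x ∈ ℝⁿ (admissibility), satisfying (√(a²+1)/b) · Σ_{i=1}^n arctan((λ_i(D²u(x)) + a − b)/(λ_i(D²u(x)) + a + b)) = −u(x) + (1/2)⟨x, Du(x)⟩ for all x ∈ ℝⁿ. Then u is a quadratic polynomial; more precisely, there exists a symmetric real n×n matrix A with eigenvalues λ̄₁, …, λ̄ₙ such that u(x) = −(√(a²+1)/b) · Σ_{i=1}^n arctan((λ̄_i + a − b)/(λ̄_i + a + b)) + (1/2)⟨x, Ax⟩ for all x ∈ ℝⁿ. -/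
open Real Filter Matrix
open scoped RealInnerProductSpace

noncomputable section

/-- The Hessian matrix of `u` at `x`, with entries the second iterated derivatives
in the coordinate directions. -/
def Hess (n : ℕ) (u : EuclideanSpace ℝ (Fin n) → ℝ) (x : EuclideanSpace ℝ (Fin n)) :
    Matrix (Fin n) (Fin n) ℝ :=
  Matrix.of fun i j =>
    iteratedFDeriv ℝ 2 u x ![EuclideanSpace.single i 1, EuclideanSpace.single j 1]

open Classical in
/-- The eigenvalues of a real symmetric matrix (junk value `0` if not symmetric). -/
def eigs {n : ℕ} (A : Matrix (Fin n) (Fin n) ℝ) : Fin n → ℝ :=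
  if h : A.IsHermitian then h.eigenvalues else 0

/-- `u` is a quadratic polynomial:
`u x = (1/2)⟨x, A x⟩ + ⟨β, x⟩ + c` with `A` symmetric. -/
def IsQuadPoly (n : ℕ) (u : EuclideanSpace ℝ (Fin n) → ℝ) : Prop :=
  ∃ (A : Matrix (Fin n) (Fin n) ℝ) (β : EuclideanSpace ℝ (Fin n)) (c : ℝ), A.IsSymm ∧
    ∀ x, u x = (1/2) * (∑ i, ∑ j, A i j * x i * x j) + ⟪β, x⟫ + c


/-- quadratic form of a matrix -/
def qf {n : ℕ} (A : Matrix (Fin n) (Fin n) ℝ) (x : EuclideanSpace ℝ (Fin n)) : ℝ :=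
  ⟪x, Matrix.toEuclideanLin A x⟫

lemma qf_eq_sum {n : ℕ} (A : Matrix (Fin n) (Fin n) ℝ) (x : EuclideanSpace ℝ (Fin n)) :
    qf A x = ∑ i, ∑ j, A i j * x i * x j := by
  simp only [qf, PiLp.inner_apply, Matrix.toLpLin_apply, Matrix.mulVec, dotProduct]
  refine Finset.sum_congr rfl fun i _ => ?_
  simp [Finset.sum_mul]
  refine Finset.sum_congr rfl fun j _ => ?_
  ring

lemma qf_eig {n : ℕ} {A : Matrix (Fin n) (Fin n) ℝ} (hA : A.IsHermitian)
    (x : EuclideanSpace ℝ (Fin n)) :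
    qf A x = ∑ j, hA.eigenvalues j * ⟪hA.eigenvectorBasis j, x⟫ ^ 2 := by
  have hs := isSymmetric_toEuclideanLin_iff.mpr hA
  have hv : ∀ j, Matrix.toEuclideanLin A (hA.eigenvectorBasis j)
      = hA.eigenvalues j • hA.eigenvectorBasis j := by
    intro j
    ext i
    have := congrFun (hA.mulVec_eigenvectorBasis j) i
    simpa [Matrix.toLpLin_apply] using this
  rw [qf, ← hA.eigenvectorBasis.sum_inner_mul_inner]
  refine Finset.sum_congr rfl fun j _ => ?_
  rw [← hs, hv, real_inner_smul_left, real_inner_comm]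
  ring

lemma norm_eig {n : ℕ} {A : Matrix (Fin n) (Fin n) ℝ} (hA : A.IsHermitian)
    (x : EuclideanSpace ℝ (Fin n)) :
    ‖x‖ ^ 2 = ∑ j, ⟪hA.eigenvectorBasis j, x⟫ ^ 2 := by
  rw [← hA.eigenvectorBasis.sum_sq_norm_inner_right x]
  simp

lemma qf_basis {n : ℕ} {A : Matrix (Fin n) (Fin n) ℝ} (hA : A.IsHermitian) (i : Fin n) :
    qf A (hA.eigenvectorBasis i) = hA.eigenvalues i := by
  rw [qf_eig hA, Finset.sum_eq_single i]
  · simp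
  · intro j _ hj
    rw [hA.eigenvectorBasis.orthonormal.2 hj]; simp
  · simp

/-- Weyl monotonicity of the sorted eigenvalues. -/
lemma weyl {n : ℕ} {A B : Matrix (Fin n) (Fin n) ℝ} (hA : A.IsHermitian) (hB : B.IsHermitian)
    (h : ∀ x, qf A x ≤ qf B x) (i : Fin n) : hA.eigenvalues i ≤ hB.eigenvalues i := by
  by_contra! hlt
  set e : Fin (Fintype.card (Fin n)) ≃ Fin n := Fintype.equivOfCardEq (Fintype.card_fin _) with he
  set k := e.symm i with hk
  have hmono : ∀ {C : Matrix (Fin n) (Fin n) ℝ} (hC : C.IsHermitian) (j l : Fin n),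
      e.symm j ≤ e.symm l → hC.eigenvalues l ≤ hC.eigenvalues j :=
    fun hC j l hjl => hC.eigenvalues₀_antitone hjl
  let S := {j : Fin n // e.symm j ≤ k}
  let T := {j : Fin n // k ≤ e.symm j}
  let V := Submodule.span ℝ (Set.range fun j : S => hA.eigenvectorBasis j.1)
  let W := Submodule.span ℝ (Set.range fun j : T => hB.eigenvectorBasis j.1)
  have hV : Module.finrank ℝ V = Fintype.card S :=
    finrank_span_eq_card (hA.eigenvectorBasis.orthonormal.linearIndependent.comp _
      Subtype.val_injective)
  have hW : Module.finrank ℝ W = Fintype.card T :=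
    finrank_span_eq_card (hB.eigenvectorBasis.orthonormal.linearIndependent.comp _
      Subtype.val_injective)
  have hS : Fintype.card S = k + 1 := by
    rw [← Fin.card_Iic, ← Fintype.card_coe]
    exact Fintype.card_congr (e.symm.subtypeEquiv (by simp))
  have hT : Fintype.card T = Fintype.card (Fin n) - k := by
    rw [← Fin.card_Ici, ← Fintype.card_coe]
    exact Fintype.card_congr (e.symm.subtypeEquiv (by simp))
  have hkn := k.2
  have hnd : ¬ Disjoint V W := by
    intro hd
    have := Submodule.finrank_add_finrank_le_of_disjoint hd
    rw [hV, hW, hS, hT, finrank_euclideanSpace] at this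
    omega
  rw [Submodule.disjoint_def] at hnd
  push Not at hnd
  obtain ⟨x, hxV, hxW, hx0⟩ := hnd
  have key : ∀ {C : Matrix (Fin n) (Fin n) ℝ} (hC : C.IsHermitian) (P : Fin n → Prop)
      (_ : x ∈ Submodule.span ℝ (Set.range fun j : {j // P j} => hC.eigenvectorBasis j.1))
      (j : Fin n), ¬ P j → ⟪hC.eigenvectorBasis j, x⟫ = 0 := by
    intro C hC P hx j hj
    refine Submodule.span_induction (p := fun x _ => ⟪hC.eigenvectorBasis j, x⟫ = 0) ?_ ?_ ?_ ?_ hx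
    · rintro _ ⟨l, rfl⟩
      refine hC.eigenvectorBasis.orthonormal.2 ?_
      rintro rfl
      exact hj l.2
    · simp
    · intro a b _ _ ha hb; rw [inner_add_right, ha, hb, add_zero]
    · intro c a _ ha; rw [real_inner_smul_right, ha, mul_zero]
  have h1 : hA.eigenvalues i * ‖x‖ ^ 2 ≤ qf A x := by
    rw [qf_eig hA, norm_eig hA, Finset.mul_sum]
    refine Finset.sum_le_sum fun j _ => ?_
    by_cases hj : e.symm j ≤ k
    · exact mul_le_mul_of_nonneg_right (hmono hA _ _ hj) (sq_nonneg _)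
    · rw [key hA (fun j => e.symm j ≤ k) hxV j hj]; simp
  have h2 : qf B x ≤ hB.eigenvalues i * ‖x‖ ^ 2 := by
    rw [qf_eig hB, norm_eig hB, Finset.mul_sum]
    refine Finset.sum_le_sum fun j _ => ?_
    by_cases hj : k ≤ e.symm j
    · exact mul_le_mul_of_nonneg_right (hmono hB _ _ hj) (sq_nonneg _)
    · rw [key hB (fun j => k ≤ e.symm j) hxW j hj]; simp
  have h3 : 0 < ‖x‖ ^ 2 := by positivity
  nlinarith [h x]

lemma sum_f_diff_le {n : ℕ} {A B : Matrix (Fin n) (Fin n) ℝ} (hA : A.IsHermitian)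
    (hB : B.IsHermitian) (h : ∀ x, qf A x ≤ qf B x) (f : ℝ → ℝ) (L : ℝ)
    (hf : ∀ s t, s ≤ t → f t - f s ≤ L * (t - s)) :
    ∑ i, f (hB.eigenvalues i) ≤ ∑ i, f (hA.eigenvalues i) + L * (B.trace - A.trace) := by
  rw [hA.trace_eq_sum_eigenvalues, hB.trace_eq_sum_eigenvalues]
  simp only [RCLike.ofReal_real_eq_id, id]
  rw [← Finset.sum_sub_distrib, Finset.mul_sum, ← Finset.sum_add_distrib]
  refine Finset.sum_le_sum fun i _ => ?_
  linarith [hf _ _ (weyl hA hB h i)]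

lemma le_sum_f_diff {n : ℕ} {A B : Matrix (Fin n) (Fin n) ℝ} (hA : A.IsHermitian)
    (hB : B.IsHermitian) (h : ∀ x, qf A x ≤ qf B x) (f : ℝ → ℝ) (c l r : ℝ)
    (hl : ∀ x, l * ‖x‖ ^ 2 ≤ qf A x) (hr : ∀ x, qf B x ≤ r * ‖x‖ ^ 2)
    (hf : ∀ s t, l ≤ s → s ≤ t → t ≤ r → c * (t - s) ≤ f t - f s) :
    ∑ i, f (hA.eigenvalues i) + c * (B.trace - A.trace) ≤ ∑ i, f (hB.eigenvalues i) := by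
  rw [hA.trace_eq_sum_eigenvalues, hB.trace_eq_sum_eigenvalues]
  simp only [RCLike.ofReal_real_eq_id, id]
  rw [← Finset.sum_sub_distrib, Finset.mul_sum, ← Finset.sum_add_distrib]
  refine Finset.sum_le_sum fun i _ => ?_
  have h1 := hl (hA.eigenvectorBasis i)
  have h2 := hr (hB.eigenvectorBasis i)
  rw [qf_basis] at h1 h2
  simp at h1 h2
  linarith [hf _ _ h1 (weyl hA hB h i) h2]

lemma qf_add {n : ℕ} (A B : Matrix (Fin n) (Fin n) ℝ) (x : EuclideanSpace ℝ (Fin n)) :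
    qf (A + B) x = qf A x + qf B x := by
  simp [qf, inner_add_right]

lemma qf_smul {n : ℕ} (A : Matrix (Fin n) (Fin n) ℝ) (c : ℝ) (x : EuclideanSpace ℝ (Fin n)) :
    qf (c • A) x = c * qf A x := by
  simp [qf, real_inner_smul_right]

lemma qf_one {n : ℕ} (x : EuclideanSpace ℝ (Fin n)) :
    qf (1 : Matrix (Fin n) (Fin n) ℝ) x = ‖x‖ ^ 2 := by
  simp [qf]

lemma qf_vec {n : ℕ} (p x : EuclideanSpace ℝ (Fin n)) :
    qf (Matrix.vecMulVec p p) x = ⟪p, x⟫ ^ 2 := by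
  rw [qf_eq_sum, sq]
  simp only [PiLp.inner_apply, Matrix.vecMulVec_apply, Finset.sum_mul_sum]
  refine Finset.sum_congr rfl fun i _ => Finset.sum_congr rfl fun j _ => ?_
  simp; ring

/-- The two-sided (Pucci type) estimate on matrices. -/
lemma pucci_matrix {n : ℕ} {A B : Matrix (Fin n) (Fin n) ℝ} (hA : A.IsHermitian)
    (hB : B.IsHermitian) (p : EuclideanSpace ℝ (Fin n)) (κ m : ℝ) (hκ : 0 ≤ κ) (hm : 0 ≤ m)
    (f : ℝ → ℝ) (L c l r : ℝ)
    (h : ∀ x, qf B x + κ * ⟪p, x⟫ ^ 2 ≤ qf A x + m * ‖x‖ ^ 2)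
    (hL : ∀ s t, s ≤ t → f t - f s ≤ L * (t - s))
    (hmono : Monotone f)
    (hl : ∀ x, l * ‖x‖ ^ 2 ≤ qf B x) (hr : ∀ x, qf A x + m * ‖x‖ ^ 2 ≤ r * ‖x‖ ^ 2)
    (hf : ∀ s t, l ≤ s → s ≤ t → t ≤ r → c * (t - s) ≤ f t - f s) :
    ∑ i, f (hB.eigenvalues i) + c * (κ * ‖p‖ ^ 2) ≤
      ∑ i, f (hA.eigenvalues i) + L * (n * m) := by
  have hvv : (Matrix.vecMulVec p p : Matrix (Fin n) (Fin n) ℝ).IsHermitian := by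
    ext i j; simp [Matrix.vecMulVec_apply, mul_comm]
  have hB' : (B + κ • Matrix.vecMulVec p p : Matrix (Fin n) (Fin n) ℝ).IsHermitian := by
    refine hB.add ?_
    ext i j; simp [Matrix.vecMulVec_apply, mul_comm]
  have hA' : (A + m • (1 : Matrix (Fin n) (Fin n) ℝ)).IsHermitian := by
    refine hA.add ?_
    simp [Matrix.IsHermitian]
  have qB : ∀ x, qf (B + κ • Matrix.vecMulVec p p) x = qf B x + κ * ⟪p, x⟫ ^ 2 := by
    intro x; rw [qf_add, qf_smul, qf_vec]
  have qA : ∀ x, qf (A + m • (1 : Matrix (Fin n) (Fin n) ℝ)) x = qf A x + m * ‖x‖ ^ 2 := by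
    intro x; rw [qf_add, qf_smul, qf_one]
  have h1 := le_sum_f_diff hB hB' (fun x => by rw [qB]; nlinarith [mul_nonneg hκ (sq_nonneg ⟪p, x⟫)])
    f c l r hl (fun x => by rw [qB]; exact (h x).trans (hr x)) hf
  have h2 := sum_f_diff_le hA hA' (fun x => by rw [qA]; nlinarith [mul_nonneg hm (sq_nonneg ‖x‖)])
    f L hL
  have h3 : ∑ i, f (hB'.eigenvalues i) ≤ ∑ i, f (hA'.eigenvalues i) :=
    Finset.sum_le_sum fun i _ => hmono (weyl hB' hA' (fun x => by rw [qA, qB]; exact h x) i)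
  have t1 : (B + κ • Matrix.vecMulVec p p : Matrix (Fin n) (Fin n) ℝ).trace - B.trace
      = κ * ‖p‖ ^ 2 := by
    rw [Matrix.trace_add, Matrix.trace_smul, EuclideanSpace.real_norm_sq_eq]
    simp [Matrix.trace, Matrix.vecMulVec_apply, sq]
  have t2 : (A + m • (1 : Matrix (Fin n) (Fin n) ℝ)).trace - A.trace = n * m := by
    rw [Matrix.trace_add, Matrix.trace_smul]
    simp [mul_comm]
  rw [t1] at h1
  rw [t2] at h2
  linarith

lemma second_test (h h' : ℝ → ℝ) (c : ℝ) (h1 : ∀ t, HasDerivAt h (h' t) t)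
    (h2 : HasDerivAt h' c 0) (hm : IsLocalMax h 0) : h' 0 = 0 ∧ c ≤ 0 := by
  have h0 : h' 0 = 0 := hm.hasDerivAt_eq_zero (h1 0)
  refine ⟨h0, ?_⟩
  by_contra! hc
  have hd : deriv h = h' := funext fun t => (h1 t).deriv
  have hmin : IsLocalMin h 0 := isLocalMin_of_deriv_deriv_pos (by rw [hd, h2.deriv]; exact hc)
    (by rw [hd, h0]) (h1 0).continuousAt
  have hconst : h =ᶠ[nhds 0] fun _ => h 0 := by
    filter_upwards [hm, hmin] with t a b using le_antisymm a b
  have : deriv h =ᶠ[nhds 0] fun _ => 0 := by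
    have := hconst.deriv
    simpa using this
  have h3 : deriv (deriv h) 0 = 0 := by
    rw [this.deriv_eq]; simp
  rw [hd, h2.deriv] at h3
  linarith

section analysis
variable {n : ℕ} {u : EuclideanSpace ℝ (Fin n) → ℝ}

lemma line1 (hu : ContDiff ℝ 2 u) (x ξ : EuclideanSpace ℝ (Fin n)) (t : ℝ) :
    HasDerivAt (fun t : ℝ => u (x + t • ξ)) (fderiv ℝ u (x + t • ξ) ξ) t := by
  have h1 : HasDerivAt (fun t : ℝ => x + t • ξ) ξ t := by
    simpa using ((hasDerivAt_id t).smul_const ξ).const_add x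
  exact ((hu.differentiable (by norm_num)) _).hasFDerivAt.comp_hasDerivAt t h1

lemma fderiv_c1 (hu : ContDiff ℝ 2 u) : ContDiff ℝ 1 (fderiv ℝ u) :=
  hu.fderiv_right (by norm_num)

lemma line2 (hu : ContDiff ℝ 2 u) (x ξ : EuclideanSpace ℝ (Fin n)) (t : ℝ) :
    HasDerivAt (fun t : ℝ => fderiv ℝ u (x + t • ξ) ξ)
      (fderiv ℝ (fderiv ℝ u) (x + t • ξ) ξ ξ) t := by
  have h1 : HasDerivAt (fun t : ℝ => x + t • ξ) ξ t := by
    simpa using ((hasDerivAt_id t).smul_const ξ).const_add x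
  have h2 := (((fderiv_c1 hu).differentiable (by norm_num)) (x + t • ξ)).hasFDerivAt.comp_hasDerivAt t h1
  simpa using h2.clm_apply (hasDerivAt_const t ξ)

/-- the right-hand side of the equation -/
def ww (u : EuclideanSpace ℝ (Fin n) → ℝ) (x : EuclideanSpace ℝ (Fin n)) : ℝ :=
  -u x + (1/2) * fderiv ℝ u x x

lemma ww_diff (hu : ContDiff ℝ 2 u) : Differentiable ℝ (ww u) := by
  have h1 := hu.differentiable (by norm_num)
  have h2 := (fderiv_c1 hu).differentiable (by norm_num)
  unfold ww
  fun_prop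

lemma max_point (hu : ContDiff ℝ 2 u) (x z : EuclideanSpace ℝ (Fin n)) (l σ β γ : ℝ)
    (hm : IsLocalMax (fun y => u (l • y) - l ^ 2 * u y
      - σ * (β * ‖y - z‖ ^ 2 - γ * (‖y - z‖ ^ 2) ^ 2)) x)
    (ξ : EuclideanSpace ℝ (Fin n)) :
    (l * fderiv ℝ u (l • x) ξ - l ^ 2 * fderiv ℝ u x ξ
      = σ * ((2 * β - 4 * γ * ‖x - z‖ ^ 2) * ⟪x - z, ξ⟫)) ∧
    (l ^ 2 * fderiv ℝ (fderiv ℝ u) (l • x) ξ ξ ≤ l ^ 2 * fderiv ℝ (fderiv ℝ u) x ξ ξ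
      + σ * ((2 * β - 4 * γ * ‖x - z‖ ^ 2) * ‖ξ‖ ^ 2 - 8 * γ * ⟪x - z, ξ⟫ ^ 2)) := by
  set s := ‖x - z‖ ^ 2 with hs
  set r := ⟪x - z, ξ⟫ with hr
  set q := ‖ξ‖ ^ 2 with hq
  have hS : ∀ t : ℝ, ‖x + t • ξ - z‖ ^ 2 = s + 2 * t * r + t ^ 2 * q := by
    intro t
    rw [show x + t • ξ - z = (x - z) + t • ξ by abel, norm_add_sq_real, real_inner_smul_right,
      norm_smul, mul_pow, hs, hr, hq]
    simp; ring
  have hS' : ∀ t : ℝ, HasDerivAt (fun t : ℝ => s + 2 * t * r + t ^ 2 * q) (2 * r + 2 * t * q) t := by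
    intro t
    have := ((((hasDerivAt_id t).const_mul 2).mul_const r).const_add s).add
      (((hasDerivAt_id t).pow 2).mul_const q)
    exact HasDerivAt.congr_deriv this (by simp)
  have hS'' : ∀ t : ℝ, HasDerivAt (fun t : ℝ => 2 * r + 2 * t * q) (2 * q) t := by
    intro t
    have := (((hasDerivAt_id t).const_mul 2).mul_const q).const_add (2 * r)
    exact HasDerivAt.congr_deriv this (by simp)
  have a1 : ∀ t : ℝ, HasDerivAt (fun t : ℝ => u (l • (x + t • ξ)))
      (fderiv ℝ u (l • x + t • (l • ξ)) (l • ξ)) t := by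
    intro t
    have := line1 hu (l • x) (l • ξ) t
    convert this using 2 with t
    rw [smul_add, smul_comm]
  have a2 := line2 hu (l • x) (l • ξ) 0
  have b1 := line1 hu x ξ
  have b2 := line2 hu x ξ 0
  let h : ℝ → ℝ := fun t => u (l • (x + t • ξ)) - l ^ 2 * u (x + t • ξ)
    - σ * (β * (s + 2 * t * r + t ^ 2 * q) - γ * (s + 2 * t * r + t ^ 2 * q) ^ 2)
  let h' : ℝ → ℝ := fun t => fderiv ℝ u (l • x + t • (l • ξ)) (l • ξ)
    - l ^ 2 * fderiv ℝ u (x + t • ξ) ξ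
    - σ * (β * (2 * r + 2 * t * q) - γ * (2 * (s + 2 * t * r + t ^ 2 * q) * (2 * r + 2 * t * q)))
  have H1 : ∀ t, HasDerivAt h (h' t) t := by
    intro t
    have := ((a1 t).sub ((b1 t).const_mul (l ^ 2))).sub
      ((((hS' t).const_mul β).sub (((hS' t).pow 2).const_mul γ)).const_mul σ)
    exact HasDerivAt.congr_deriv this (by simp [h'])
  have H2 := (a2.sub (b2.const_mul (l ^ 2))).sub
      ((((hS'' 0).const_mul β).sub ((((hS' 0).const_mul 2).mul (hS'' 0)).const_mul γ)).const_mul σ)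
  have HM : IsLocalMax h 0 := by
    have hc : ContinuousAt (fun t : ℝ => x + t • ξ) 0 := by fun_prop
    have : Tendsto (fun t : ℝ => x + t • ξ) (nhds 0) (nhds x) := by
      simpa [ContinuousAt] using hc
    have h3 := this.eventually hm
    filter_upwards [h3] with t ht
    simp only [hS] at ht
    simpa [h, ← hs] using ht
  obtain ⟨e1, e2⟩ := second_test h h' _ H1 H2 HM
  simp [h'] at e1
  simp at e2
  constructor
  · linarith
  · linarith

lemma unif (hu : ContDiff ℝ 2 u) (K : Set (EuclideanSpace ℝ (Fin n))) (hK : IsCompact K)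
    (η : ℝ) (hη : 0 < η) :
    ∀ᶠ l : ℝ in nhdsWithin 1 (Set.Ioi 1), ∀ x ∈ K,
      |u (l • x) - l ^ 2 * u x - (l ^ 2 - 1) * ww u x| ≤ η * (l ^ 2 - 1) := by
  have hc0 := hu.continuous
  have hc1 := (fderiv_c1 hu).continuous
  have hG : Continuous (fun q : ℝ × EuclideanSpace ℝ (Fin n) =>
      fderiv ℝ u (q.1 • q.2) q.2 - q.1 * fderiv ℝ u q.2 q.2) := by fun_prop
  have h1 : ∀ᶠ l : ℝ in nhds 1, ∀ x ∈ K, |fderiv ℝ u (l • x) x - l * fderiv ℝ u x x| < η := by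
    refine hK.eventually_forall_of_forall_eventually fun x _ => ?_
    have : Tendsto (fun q : ℝ × EuclideanSpace ℝ (Fin n) =>
      |fderiv ℝ u (q.1 • q.2) q.2 - q.1 * fderiv ℝ u q.2 q.2|) (nhds (1, x)) (nhds 0) := by
      have := hG.abs.tendsto (1, x)
      simpa using this
    have h2 := this.eventually (gt_mem_nhds hη)
    exact h2
  obtain ⟨ε, hε, hb⟩ := Metric.eventually_nhds_iff.1 h1
  have hnear : ∀ᶠ l : ℝ in nhdsWithin 1 (Set.Ioi 1), l ∈ Set.Ioo 1 (1 + ε) :=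
    Ioo_mem_nhdsGT (by linarith)
  filter_upwards [hnear] with l hl x hx
  obtain ⟨hl1, hl2⟩ := hl
  have hd : ∀ t ∈ Set.Icc 1 l, HasDerivWithinAt
      (fun t : ℝ => u (t • x) - t ^ 2 * u x - (t ^ 2 - 1) * ww u x)
      (fderiv ℝ u (t • x) x - t * fderiv ℝ u x x) (Set.Icc 1 l) t := by
    intro t _
    have e1 := line1 hu 0 x t
    simp only [zero_add] at e1
    have e2 := (e1.sub (((hasDerivAt_id t).pow 2).mul_const (u x))).sub
      ((((hasDerivAt_id t).pow 2).sub_const 1).mul_const (ww u x))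
    refine HasDerivAt.hasDerivWithinAt ?_
    exact HasDerivAt.congr_deriv e2 (by simp [ww]; ring)
  have := Convex.norm_image_sub_le_of_norm_hasDerivWithin_le (C := η) hd (fun t ht => by
    refine le_of_lt (hb ?_ x hx)
    rw [Real.dist_eq, abs_lt]
    constructor <;> linarith [ht.1, ht.2]) (convex_Icc 1 l)
    (Set.left_mem_Icc.2 hl1.le) (Set.right_mem_Icc.2 hl1.le)
  simp only [one_smul, one_pow, Real.norm_eq_abs] at this
  rw [abs_of_pos (by linarith : 0 < l - 1)] at this
  have e : u (l • x) - l ^ 2 * u x - (l ^ 2 - 1) * ww u x - (u x - 1 * u x - (1 - 1) * ww u x)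
    = u (l • x) - l ^ 2 * u x - (l ^ 2 - 1) * ww u x := by ring
  rw [e] at this
  refine this.trans ?_
  refine mul_le_mul_of_nonneg_left ?_ hη.le
  nlinarith

set_option maxHeartbeats 1000000 in
lemma comparison (hu : ContDiff ℝ 2 u) (N R c : ℝ)
    (hP : ∀ (x y p : EuclideanSpace ℝ (Fin n)) (m κ : ℝ), ‖x‖ ≤ R → 0 ≤ m → m ≤ 1 → 0 ≤ κ →
      (∀ ξ, fderiv ℝ (fderiv ℝ u) y ξ ξ + κ * ⟪p, ξ⟫ ^ 2 ≤
        fderiv ℝ (fderiv ℝ u) x ξ ξ + m * ‖ξ‖ ^ 2) →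
      ww u y + c * (κ * ‖p‖ ^ 2) ≤ ww u x + N * m)
    (K : Set (EuclideanSpace ℝ (Fin n))) (hK : IsCompact K) (hKR : ∀ x ∈ K, ‖x‖ ≤ R)
    (z : EuclideanSpace ℝ (Fin n)) (β γ δ M : ℝ) (hγ : 0 ≤ γ) (hδ : 0 < δ)
    (hk : ∀ x ∈ K, 0 ≤ 2 * β - 4 * γ * ‖x - z‖ ^ 2)
    (hs : ∀ x ∈ K, N * (2 * β - 4 * γ * ‖x - z‖ ^ 2) - c * (8 * γ * ‖x - z‖ ^ 2)
      - (1/2) * ((2 * β - 4 * γ * ‖x - z‖ ^ 2) * ⟪x - z, x⟫) ≤ - δ)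
    (hb : ∀ x ∈ K \ interior K, ww u x - (β * ‖x - z‖ ^ 2 - γ * (‖x - z‖ ^ 2) ^ 2) ≤ M)
    (y : EuclideanSpace ℝ (Fin n)) (hy : y ∈ K) :
    ww u y - (β * ‖y - z‖ ^ 2 - γ * (‖y - z‖ ^ 2) ^ 2) ≤ M := by
  by_contra! hlt
  set gap := ww u y - (β * ‖y - z‖ ^ 2 - γ * (‖y - z‖ ^ 2) ^ 2) - M with hgap
  have hgap0 : 0 < gap := by linarith
  obtain ⟨T, hT⟩ : ∃ T : ℝ, ∀ x ∈ K,
      |(2 * β - 4 * γ * ‖x - z‖ ^ 2) * ⟪x - z, x⟫| ≤ T := by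
    obtain ⟨T, hT⟩ := hK.exists_bound_of_continuousOn
      (f := fun x => (2 * β - 4 * γ * ‖x - z‖ ^ 2) * ⟪x - z, x⟫)
      (by fun_prop)
    exact ⟨T, hT⟩
  have hT0 : 0 ≤ T := (abs_nonneg _).trans (hT y hy)
  have hβ : 0 ≤ β := by
    have := hk y hy
    have h2 : 0 ≤ γ * ‖y - z‖ ^ 2 := by positivity
    linarith
  set η := min (gap / 3) (δ / 8) with hη
  have hη0 : 0 < η := by positivity
  have hη1 : η ≤ gap / 3 := min_le_left _ _
  have hη2 : η ≤ δ / 8 := min_le_right _ _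
  have hlim : Tendsto (fun l : ℝ => l ^ 2) (nhdsWithin 1 (Set.Ioi 1)) (nhds 1) := by
    have : Tendsto (fun l : ℝ => l ^ 2) (nhds 1) (nhds (1 ^ 2)) := (continuous_pow 2).tendsto 1
    rw [one_pow] at this
    exact this.mono_left nhdsWithin_le_nhds
  have ev1 : ∀ᶠ l : ℝ in nhdsWithin 1 (Set.Ioi 1), l ^ 2 < 2 :=
    hlim.eventually (gt_mem_nhds (by norm_num))
  have ev2 : ∀ᶠ l : ℝ in nhdsWithin 1 (Set.Ioi 1), l ^ 2 < 1 + 1 / (2 * β + 1) :=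
    hlim.eventually (gt_mem_nhds (by
      have : 0 < 1 / (2 * β + 1) := by positivity
      linarith))
  have ev3 : ∀ᶠ l : ℝ in nhdsWithin 1 (Set.Ioi 1), l ^ 2 < 1 + δ / (T + 1) / 2 :=
    hlim.eventually (gt_mem_nhds (by
      have : 0 < δ / (T + 1) / 2 := by positivity
      linarith))
  obtain ⟨l, hl1, hl2, hl3, hl4, hl0⟩ := (ev1.and (ev2.and (ev3.and
    ((unif hu K hK η hη0).and self_mem_nhdsWithin)))).exists
  have hl0 : 1 < l := hl0
  set σ := l ^ 2 - 1 with hσ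
  have hσ0 : 0 < σ := by rw [hσ]; nlinarith
  have hc0 := hu.continuous
  obtain ⟨x, hxK, hxm⟩ := hK.exists_isMaxOn ⟨y, hy⟩ (f := fun y => u (l • y) - l ^ 2 * u y
      - σ * (β * ‖y - z‖ ^ 2 - γ * (‖y - z‖ ^ 2) ^ 2)) (by fun_prop)
  have hmy := hxm hy
  simp only [Set.mem_ofPred_eq] at hmy
  have gx := abs_le.1 (hl4 x hxK)
  have gy := abs_le.1 (hl4 y hy)
  have hinter : x ∈ interior K := by
    by_contra hni
    have := hb x ⟨hxK, hni⟩
    have h2 := mul_le_mul_of_nonneg_left this hσ0.le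
    have h3 : σ * (ww u y - (β * ‖y - z‖ ^ 2 - γ * (‖y - z‖ ^ 2) ^ 2)) = σ * (M + gap) := by
      rw [hgap]; ring
    have h4 : η * σ ≤ gap / 3 * σ := mul_le_mul_of_nonneg_right hη1 hσ0.le
    have h5 : 0 < gap * σ := by positivity
    nlinarith [gx.2, gy.1]
  have hloc : IsLocalMax (fun y => u (l • y) - l ^ 2 * u y
      - σ * (β * ‖y - z‖ ^ 2 - γ * (‖y - z‖ ^ 2) ^ 2)) x :=
    hxm.isLocalMax (mem_interior_iff_mem_nhds.1 hinter)
  set k := 2 * β - 4 * γ * ‖x - z‖ ^ 2 with hkdef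
  have hk0 : 0 ≤ k := hk x hxK
  have hkβ : k ≤ 2 * β := by
    have : 0 ≤ γ * ‖x - z‖ ^ 2 := by positivity
    linarith
  have first := (max_point hu x z l σ β γ hloc x).1
  have second := fun ξ => (max_point hu x z l σ β γ hloc ξ).2
  have hl2p : 0 < l ^ 2 := by positivity
  have hτ : σ / l ^ 2 * k ≤ 1 := by
    have h1 : σ / l ^ 2 ≤ σ := div_le_self hσ0.le (by linarith)
    have h2 : σ ≤ 1 / (2 * β + 1) := by linarith
    have h3 : σ * (2 * β + 1) ≤ 1 := by
      rwa [le_div_iff₀ (by positivity)] at h2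
    calc σ / l ^ 2 * k ≤ σ * (2 * β) := by gcongr
      _ ≤ 1 := by linarith
  have hp := hP x (l • x) (x - z) (σ / l ^ 2 * k) (σ / l ^ 2 * (8 * γ)) (hKR x hxK)
    (by positivity) hτ (by positivity) (by
      intro ξ
      have := second ξ
      have h2 : l ^ 2 * (fderiv ℝ (fderiv ℝ u) (l • x) ξ ξ + σ / l ^ 2 * (8 * γ) * ⟪x - z, ξ⟫ ^ 2)
        ≤ l ^ 2 * (fderiv ℝ (fderiv ℝ u) x ξ ξ + σ / l ^ 2 * k * ‖ξ‖ ^ 2) := by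
        have e1 : l ^ 2 * (fderiv ℝ (fderiv ℝ u) (l • x) ξ ξ + σ / l ^ 2 * (8 * γ) * ⟪x - z, ξ⟫ ^ 2)
          = l ^ 2 * fderiv ℝ (fderiv ℝ u) (l • x) ξ ξ + σ * (8 * γ) * ⟪x - z, ξ⟫ ^ 2 := by
          field_simp
        have e2 : l ^ 2 * (fderiv ℝ (fderiv ℝ u) x ξ ξ + σ / l ^ 2 * k * ‖ξ‖ ^ 2)
          = l ^ 2 * fderiv ℝ (fderiv ℝ u) x ξ ξ + σ * k * ‖ξ‖ ^ 2 := by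
          field_simp
        rw [e1, e2]
        linarith
      exact le_of_mul_le_mul_left h2 hl2p)
  -- ww (l x) - ww x = -g + σ/2 * k ⟪x - z, x⟫
  have hw : ww u (l • x) - ww u x = -(u (l • x) - l ^ 2 * u x - σ * ww u x)
      + (1/2) * (σ * (k * ⟪x - z, x⟫)) := by
    rw [← first]
    simp only [ww, map_smul, smul_eq_mul, hσ]
    ring
  have hsx := hs x hxK
  have hTx := abs_le.1 (hT x hxK)
  rw [← hkdef] at hsx hTx
  set P := k * ⟪x - z, x⟫ with hPdef
  set g := u (l • x) - l ^ 2 * u x - σ * ww u x with hg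
  set s := ‖x - z‖ ^ 2 with hsdef
  have h6 : -(η * σ) + (1/2) * (σ * P) + c * (σ / l ^ 2 * (8 * γ) * s) ≤
      N * (σ / l ^ 2 * k) := by linarith [gx.2]
  have h7 : l ^ 2 * (-(η * σ) + (1/2) * (σ * P) + c * (σ / l ^ 2 * (8 * γ) * s)) ≤
      l ^ 2 * (N * (σ / l ^ 2 * k)) := mul_le_mul_of_nonneg_left h6 hl2p.le
  have e1 : l ^ 2 * (-(η * σ) + (1/2) * (σ * P) + c * (σ / l ^ 2 * (8 * γ) * s))
    = σ * (l ^ 2 * (-η) + l ^ 2 * (1/2) * P + c * (8 * γ * s)) := by field_simp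
  have e2 : l ^ 2 * (N * (σ / l ^ 2 * k)) = σ * (N * k) := by field_simp
  rw [e1, e2] at h7
  have h8 := le_of_mul_le_mul_left h7 hσ0
  have h9 : σ * T ≤ δ / 2 := by
    have : σ ≤ δ / (T + 1) / 2 := by linarith
    calc σ * T ≤ δ / (T + 1) / 2 * (T + 1) := by gcongr; linarith
      _ = δ / 2 := by field_simp
  have h10 : -(σ * T) ≤ σ * P := by nlinarith [hTx.1]
  have h11 : l ^ 2 * η ≤ 2 * (δ / 8) := by
    gcongr
  have h12 : l ^ 2 * (1/2) * P = (1/2) * P + (1/2) * (σ * P) := by rw [hσ]; ring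
  linarith

end analysis

section global
variable {n : ℕ} {u : EuclideanSpace ℝ (Fin n) → ℝ}

/-- Pucci-type structure condition -/
def PucciCond (u : EuclideanSpace ℝ (Fin n) → ℝ) (N R c : ℝ) : Prop :=
  ∀ (x y p : EuclideanSpace ℝ (Fin n)) (m κ : ℝ), ‖x‖ ≤ R → 0 ≤ m → m ≤ 1 → 0 ≤ κ →
      (∀ ξ, fderiv ℝ (fderiv ℝ u) y ξ ξ + κ * ⟪p, ξ⟫ ^ 2 ≤
        fderiv ℝ (fderiv ℝ u) x ξ ξ + m * ‖ξ‖ ^ 2) →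
      ww u y + c * (κ * ‖p‖ ^ 2) ≤ ww u x + N * m

lemma exists_max (hu : ContDiff ℝ 2 u) (N : ℝ) (hN : 0 ≤ N)
    (hP : ∀ R, ∃ c, 0 < c ∧ PucciCond u N R c) (Mw : ℝ) (hMw : ∀ x, ww u x ≤ Mw) :
    ∃ x0, ∀ x, ww u x ≤ ww u x0 := by
  have hwc : Continuous (ww u) := (ww_diff hu).continuous
  set R0 := 2 * N + 1 with hR0
  obtain ⟨x0, hx0, hmax⟩ := (isCompact_closedBall (0 : EuclideanSpace ℝ (Fin n)) R0).exists_isMaxOn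
    ⟨0, by simp; linarith⟩ hwc.continuousOn
  refine ⟨x0, fun x => ?_⟩
  by_cases hx : ‖x‖ ≤ R0
  · exact hmax (by simpa using hx)
  push Not at hx
  have key : ∀ ε : ℝ, 0 < ε → ww u x ≤ ww u x0 + ε * ‖x‖ ^ 2 := by
    intro ε hε
    obtain ⟨ρ, hρ1, hρ2, hρ3⟩ : ∃ ρ : ℝ, ‖x‖ ≤ ρ ∧ 1 ≤ ρ ∧ (Mw - ww u x0) / ε ≤ ρ :=
      ⟨max ‖x‖ (max 1 ((Mw - ww u x0) / ε)), by simp, by simp, by simp⟩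
    obtain ⟨c, hc, hPc⟩ := hP ρ
    let K : Set (EuclideanSpace ℝ (Fin n)) := {x | R0 ≤ ‖x‖ ∧ ‖x‖ ≤ ρ}
    have hKcl : IsClosed K := (isClosed_le continuous_const continuous_norm).inter
      (isClosed_le continuous_norm continuous_const)
    have hKc : IsCompact K := (isCompact_closedBall (0 : EuclideanSpace ℝ (Fin n)) ρ).of_isClosed_subset
      hKcl (fun y hy => by simpa using hy.2)
    have hinter : {x : EuclideanSpace ℝ (Fin n) | R0 < ‖x‖ ∧ ‖x‖ < ρ} ⊆ interior K :=
      interior_maximal (fun y hy => ⟨hy.1.le, hy.2.le⟩)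
        ((isOpen_lt continuous_const continuous_norm).inter
          (isOpen_lt continuous_norm continuous_const))
    have := comparison hu N ρ c hPc K hKc (fun y hy => hy.2) 0 ε 0 ε (ww u x0) le_rfl hε
      (fun y _ => by simp; linarith) (fun y hy => by
        simp only [sub_zero, real_inner_self_eq_norm_sq]
        have h1 : 2 * N + 1 ≤ ‖y‖ ^ 2 := by
          have := hy.1
          nlinarith
        nlinarith) (fun y hy => by
        simp only [sub_zero, zero_mul]
        obtain ⟨⟨h1, h2⟩, h3⟩ := hy
        rcases h1.eq_or_lt with h1 | h1
        · have : ww u y ≤ ww u x0 := hmax (by simp [← h1])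
          have : 0 ≤ ε * ‖y‖ ^ 2 := by positivity
          linarith
        · rcases h2.eq_or_lt with h2 | h2
          · rw [h2]
            have h4 := hMw y
            rw [div_le_iff₀ hε] at hρ3
            nlinarith [mul_le_mul_of_nonneg_left hρ2 (mul_nonneg hε.le (by linarith : 0 ≤ ρ))]
          · exact absurd (hinter ⟨h1, h2⟩) h3) x ⟨hx.le, hρ1⟩
    simp only [sub_zero, zero_mul] at this
    linarith
  refine le_of_forall_pos_le_add fun e he => ?_
  have hx2 : 0 < ‖x‖ ^ 2 := by
    have : 0 < ‖x‖ := by linarith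
    positivity
  have := key (e / ‖x‖ ^ 2) (by positivity)
  rwa [div_mul_cancel₀ _ hx2.ne'] at this

lemma hopf_const (hu : ContDiff ℝ 2 u) (N : ℝ) (hN : 0 ≤ N)
    (hP : ∀ R, ∃ c, 0 < c ∧ PucciCond u N R c) (x0 : EuclideanSpace ℝ (Fin n))
    (hx0 : ∀ x, ww u x ≤ ww u x0) (z : EuclideanSpace ℝ (Fin n)) : ww u z = ww u x0 := by
  have hwd := ww_diff hu
  have hwc : Continuous (ww u) := hwd.continuous
  by_contra hz
  set M := ww u x0 with hM
  let S : Set (EuclideanSpace ℝ (Fin n)) := {x | ww u x = M}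
  have hS : IsClosed S := isClosed_eq hwc continuous_const
  obtain ⟨y, hyS, hy⟩ := hS.exists_infDist_eq_dist ⟨x0, rfl⟩ z
  have hyM : ww u y = M := hyS
  set ρ := dist z y with hρ
  have hρ0 : 0 < ρ := by
    rw [hρ, dist_pos]; rintro rfl; exact hz hyM
  have hball : ∀ x, ‖x - z‖ < ρ → ww u x < M := by
    intro x hx
    refine lt_of_le_of_ne (hx0 x) fun hxM => ?_
    have := Metric.infDist_le_dist_of_mem (x := z) (show x ∈ S from hxM)
    rw [hy, dist_comm, dist_eq_norm] at this
    linarith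
  set R := ‖z‖ + ρ with hR
  have hR0 : 0 ≤ R := by positivity
  obtain ⟨c, hc, hPc⟩ := hP R
  obtain ⟨B, hB1, hB2⟩ : ∃ B : ℝ, 2 / ρ ^ 2 ≤ B ∧ (6 * N + 3 * ρ * R + 1) / (4 * c * ρ ^ 2) ≤ B :=
    ⟨max _ _, le_max_left _ _, le_max_right _ _⟩
  have hBpos : 0 < B := lt_of_lt_of_le (by positivity) hB1
  rw [div_le_iff₀ (by positivity)] at hB1 hB2
  have hB3 : 1 / B ≤ ρ ^ 2 / 2 := by
    rw [div_le_iff₀ hBpos]; linarith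
  have hB4 : 0 < 1 / B := by positivity
  -- inner compact set
  let J : Set (EuclideanSpace ℝ (Fin n)) := {x | ‖x - z‖ ^ 2 ≤ ρ ^ 2 - 1 / B}
  have hJcl : IsClosed J := isClosed_le (by fun_prop) continuous_const
  have hJsub : ∀ x ∈ J, ‖x - z‖ < ρ := by
    intro x hx
    have : ‖x - z‖ ^ 2 ≤ ρ ^ 2 - 1 / B := hx
    exact lt_of_pow_lt_pow_left₀ 2 hρ0.le (by linarith)
  have hJc : IsCompact J := (isCompact_closedBall z ρ).of_isClosed_subset hJcl
    (fun x hx => by rw [Metric.mem_closedBall, dist_eq_norm]; exact (hJsub x hx).le)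
  obtain ⟨x1, hx1, hx1m⟩ := hJc.exists_isMaxOn ⟨z, by simp [J]; rw [one_div] at hB3; nlinarith⟩
    hwc.continuousOn
  have hgap : 0 < M - ww u x1 := by linarith [hball x1 (hJsub x1 hx1)]
  set ε := (M - ww u x1) * B / 2 with hε
  have hε0 : 0 < ε := by positivity
  let K : Set (EuclideanSpace ℝ (Fin n)) := {x | ρ ^ 2 - 1 / B ≤ ‖x - z‖ ^ 2 ∧ ‖x - z‖ ^ 2 ≤ ρ ^ 2}
  have hcs : Continuous (fun x : EuclideanSpace ℝ (Fin n) => ‖x - z‖ ^ 2) := by fun_prop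
  have hKcl : IsClosed K := (isClosed_le continuous_const hcs).inter
      (isClosed_le hcs continuous_const)
  have hKρ : ∀ x ∈ K, ‖x - z‖ ≤ ρ := fun x hx => le_of_sq_le_sq hx.2 hρ0.le
  have hKc : IsCompact K := (isCompact_closedBall z ρ).of_isClosed_subset hKcl
    (fun x hx => by rw [Metric.mem_closedBall, dist_eq_norm]; exact hKρ x hx)
  have hKR : ∀ x ∈ K, ‖x‖ ≤ R := by
    intro x hx
    calc ‖x‖ = ‖z + (x - z)‖ := by congr 1; abel
      _ ≤ ‖z‖ + ‖x - z‖ := norm_add_le _ _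
      _ ≤ R := by have := hKρ x hx; linarith
  have hinter : {x : EuclideanSpace ℝ (Fin n) | ρ ^ 2 - 1 / B < ‖x - z‖ ^ 2 ∧ ‖x - z‖ ^ 2 < ρ ^ 2}
      ⊆ interior K :=
    interior_maximal (fun y hy => ⟨hy.1.le, hy.2.le⟩)
      ((isOpen_lt continuous_const hcs).inter (isOpen_lt hcs continuous_const))
  have hkk : ∀ s : ℝ, 2 * (ε * (1 + 2 * B * ρ ^ 2)) - 4 * (ε * B) * s
      = ε * (2 + 4 * (B * (ρ ^ 2 - s))) := fun s => by ring
  have hBB : B * (1 / B) = 1 := by field_simp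
  have hkb : ∀ x ∈ K, 0 ≤ B * (ρ ^ 2 - ‖x - z‖ ^ 2) ∧ B * (ρ ^ 2 - ‖x - z‖ ^ 2) ≤ 1 := by
    intro x hx
    refine ⟨mul_nonneg hBpos.le (by linarith [hx.2]), ?_⟩
    calc B * (ρ ^ 2 - ‖x - z‖ ^ 2) ≤ B * (1 / B) := by
          gcongr; linarith [hx.1]
      _ = 1 := hBB
  have hcmp := comparison hu N R c hPc K hKc hKR z (ε * (1 + 2 * B * ρ ^ 2)) (ε * B) ε
    (M + ε * (- (ρ ^ 2 + B * (ρ ^ 2) ^ 2))  + 0) (by positivity) hε0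
    (fun x hx => by
      rw [hkk]
      have := (hkb x hx).1
      positivity)
    (fun x hx => by
      rw [hkk]
      obtain ⟨h1, h2⟩ := hkb x hx
      set q := B * (ρ ^ 2 - ‖x - z‖ ^ 2) with hq
      have h3 : |⟪x - z, x⟫| ≤ ρ * R :=
        (abs_real_inner_le_norm _ _).trans (by
          have := hKρ x hx
          have := hKR x hx
          gcongr)
      have h4 := (abs_le.1 h3).1
      have h5 : ρ ^ 2 / 2 ≤ ‖x - z‖ ^ 2 := by linarith [hx.1]
      have h6 : c * (8 * B * (ρ ^ 2 / 2)) ≤ c * (8 * B * ‖x - z‖ ^ 2) := by gcongr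
      have h7 : N * (2 + 4 * q) ≤ N * 6 := by gcongr; linarith
      have h8 : -(6 * (ρ * R)) ≤ (2 + 4 * q) * ⟪x - z, x⟫ := by
        have : 0 ≤ ρ * R := by positivity
        nlinarith
      have h9 : N * (2 + 4 * q) - c * (8 * B * ‖x - z‖ ^ 2) - 1 / 2 * ((2 + 4 * q) * ⟪x - z, x⟫)
        ≤ -1 := by linarith
      have := mul_le_mul_of_nonneg_left h9 hε0.le
      linarith)
    (fun x hx => by
      obtain ⟨⟨h1, h2⟩, h3⟩ := hx
      rcases h1.eq_or_lt with h1 | h1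
      · have h4 : ww u x ≤ ww u x1 := hx1m (show x ∈ J from h1.ge)
        rw [← h1]
        have h5 : ε * (1 / B) = (M - ww u x1) / 2 := by rw [hε]; field_simp
        set i := 1 / B
        have h6 : ε * (1 + 2 * B * ρ ^ 2) * (ρ ^ 2 - i) - ε * B * (ρ ^ 2 - i) ^ 2
          = ε * (ρ ^ 2 + B * (ρ ^ 2) ^ 2) - ε * i - ε * i * (B * i) := by ring
        rw [h6, hBB]
        linarith
      · rcases h2.eq_or_lt with h2 | h2
        · rw [h2]
          have := hx0 x
          nlinarith
        · exact absurd (hinter ⟨h1, h2⟩) h3)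
  -- conclusion at y
  have hyz : ‖y - z‖ = ρ := by rw [hρ, dist_comm, dist_eq_norm]
  set v := z - y with hv
  have hline : ∀ t : ℝ, ‖y + t • v - z‖ ^ 2 = (1 - t) ^ 2 * ρ ^ 2 := by
    intro t
    rw [show y + t • v - z = (1 - t) • (y - z) by rw [hv]; module, norm_smul, mul_pow, hyz]
    simp
  have hle : ∀ t : ℝ, 0 < t → t < 1 → 2 * ρ ^ 2 * t < 1 / B → 
      ww u (y + t • v) + ε * ρ ^ 2 * t ≤ M := by
    intro t ht0 ht1 ht2
    have h1 := hcmp (y + t • v) ⟨by rw [hline]; nlinarith [sq_nonneg (t * ρ)],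
      by rw [hline]; nlinarith [sq_nonneg ρ, mul_pos (mul_pos ht0 (by linarith : 0 < 2 - t)) (pow_pos hρ0 2)]⟩
    rw [hline] at h1
    set s := (1 - t) ^ 2 * ρ ^ 2 with hs
    have h2 : ε * (1 + 2 * B * ρ ^ 2) * s - ε * B * s ^ 2
      = ε * (ρ ^ 2 + B * (ρ ^ 2) ^ 2) - ε * (ρ ^ 2 - s) - ε * B * (ρ ^ 2 - s) ^ 2 := by ring
    have h3 : 0 ≤ ε * B * (ρ ^ 2 - s) ^ 2 := by positivity
    have h4 : ε * (ρ ^ 2 * t) ≤ ε * (ρ ^ 2 - s) := by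
      refine mul_le_mul_of_nonneg_left ?_ hε0.le
      rw [hs]
      nlinarith [mul_pos (mul_pos ht0 (by linarith : 0 < 1 - t)) (pow_pos hρ0 2)]
    linarith
  have hd1 : HasDerivAt (fun t : ℝ => y + t • v) v 0 := by
    simpa using ((hasDerivAt_id (0:ℝ)).smul_const v).const_add y
  have hd2 : HasDerivAt (fun t : ℝ => ww u (y + t • v)) (fderiv ℝ (ww u) (y + (0:ℝ) • v) v) 0 :=
    (hwd _).hasFDerivAt.comp_hasDerivAt 0 hd1
  have hz0 : fderiv ℝ (ww u) (y + (0:ℝ) • v) v = 0 := by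
    refine IsLocalMax.hasDerivAt_eq_zero (f := fun t : ℝ => ww u (y + t • v)) ?_ hd2
    refine Eventually.of_forall fun t => ?_
    simp only [zero_smul, add_zero]
    rw [hyM]; exact hx0 _
  rw [hz0] at hd2
  have hd3 : HasDerivAt (fun t : ℝ => ww u (y + t • v) + ε * ρ ^ 2 * t) (ε * ρ ^ 2) 0 := by
    have := hd2.add ((hasDerivAt_id (0:ℝ)).const_mul (ε * ρ ^ 2))
    exact HasDerivAt.congr_deriv this (by simp)
  have hsl := hd3.tendsto_slope_zero_right
  have hpos : 0 < ε * ρ ^ 2 := by positivity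
  have hev := hsl.eventually (lt_mem_nhds hpos)
  have hsm : ∀ᶠ t : ℝ in nhdsWithin 0 (Set.Ioi 0), t ∈ Set.Ioo 0 (min 1 (1 / B / (2 * ρ ^ 2))) :=
    Ioo_mem_nhdsGT (by positivity)
  obtain ⟨t, ht, ht0, ht1⟩ := (hev.and hsm).exists
  have h1 := hle t ht0 (lt_of_lt_of_le ht1 (min_le_left _ _)) (by
    have := lt_of_lt_of_le ht1 (min_le_right _ _)
    rw [lt_div_iff₀ (by positivity)] at this
    linarith)
  simp only [zero_add, zero_smul, add_zero, mul_zero, smul_eq_mul, hyM] at ht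
  have h2 : t⁻¹ * (ww u (y + t • v) + ε * ρ ^ 2 * t - M) ≤ 0 :=
    mul_nonpos_of_nonneg_of_nonpos (by positivity) (by linarith)
  linarith

lemma quad_of_const (hu : ContDiff ℝ 2 u) (m : ℝ) (hm : ∀ x, ww u x = m)
    (x : EuclideanSpace ℝ (Fin n)) :
    u x = -m + (1/2) * fderiv ℝ (fderiv ℝ u) 0 x x := by
  have hE : ∀ y, fderiv ℝ u y y = 2 * (u y + m) := by
    intro y; have := hm y; simp only [ww] at this; linarith
  -- second derivative identity
  have l1 := line1 hu 0 x
  have l2 := line2 hu 0 x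
  simp only [zero_add] at l1 l2
  have hE' : ∀ t : ℝ, t * fderiv ℝ u (t • x) x = 2 * (u (t • x) + m) := by
    intro t; rw [← hE]; simp
  have h2 : ∀ t : ℝ, fderiv ℝ u (t • x) x = t * fderiv ℝ (fderiv ℝ u) (t • x) x x := by
    intro t
    have d1 := (hasDerivAt_id t).mul (l2 t)
    have d2 := ((l1 t).add_const m).const_mul 2
    have e : (id * fun t : ℝ => fderiv ℝ u (t • x) x) = fun t : ℝ => 2 * (u (t • x) + m) := by
      funext t; exact hE' t
    rw [e] at d1
    have := d1.unique d2
    simp at this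
    linarith
  have hconst : ∀ s : ℝ, Real.exp (-2 * s) * (u (Real.exp s • x) + m) = u x + m := by
    intro s
    have hd : ∀ s : ℝ, HasDerivAt (fun s => Real.exp (-2 * s) * (u (Real.exp s • x) + m)) 0 s := by
      intro s
      have d1 := (((l1 (Real.exp s)).comp s (Real.hasDerivAt_exp s)).add_const m)
      have d2 : HasDerivAt (fun s : ℝ => Real.exp (-2 * s)) (Real.exp (-2 * s) * (-2)) s := by
        have := ((hasDerivAt_id s).const_mul (-2)).exp
        exact HasDerivAt.congr_deriv this (by simp)
      have d3 := d2.mul d1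
      refine HasDerivAt.congr_deriv d3 ?_
      have := hE' (Real.exp s)
      simp only [Function.comp]
      linear_combination Real.exp (-2 * s) * this
    have := is_const_of_deriv_eq_zero (fun s => (hd s).differentiableAt) (fun s => (hd s).deriv) s 0
    simpa using this
  have hval : ∀ s : ℝ, u x + m = (1/2) * fderiv ℝ (fderiv ℝ u) (Real.exp s • x) x x := by
    intro s
    have h3 := hE' (Real.exp s)
    rw [h2] at h3
    rw [← hconst s]
    have h4 : Real.exp (-2 * s) * (Real.exp s * Real.exp s) = 1 := by
      rw [← Real.exp_add, ← Real.exp_add]; ring_nf; simp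
    linear_combination (-1/2) * Real.exp (-2 * s) * h3 + (1/2) * fderiv ℝ (fderiv ℝ u) (Real.exp s • x) x x * h4
  have hc2 : Continuous (fderiv ℝ (fderiv ℝ u)) := (fderiv_c1 hu).continuous_fderiv (by norm_num)
  have hcont : Continuous (fun t : ℝ => (1/2) * fderiv ℝ (fderiv ℝ u) (t • x) x x) := by fun_prop
  have ht : Tendsto (fun s : ℝ => (1/2) * fderiv ℝ (fderiv ℝ u) (Real.exp s • x) x x) atBot
      (nhds ((1/2) * fderiv ℝ (fderiv ℝ u) ((0:ℝ) • x) x x)) :=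
    (hcont.tendsto 0).comp Real.tendsto_exp_atBot
  have : u x + m = (1/2) * fderiv ℝ (fderiv ℝ u) ((0:ℝ) • x) x x := by
    refine tendsto_nhds_unique ?_ ht
    simp only [← hval]
    exact tendsto_const_nhds
  rw [zero_smul] at this
  linarith

end global

lemma arctan_shift (a b s : ℝ) (hb : 0 < b) (hs : -(a + b) < s) :
    Real.arctan ((s + a - b) / (s + a + b)) = Real.arctan ((s + a) / b) - π / 4 := by
  have h1 : 0 < s + a + b := by linarith
  have h2 : (s + a) / b * (-1) < 1 := by
    rw [mul_neg_one, ← neg_div, div_lt_one hb]; linarith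
  have := Real.arctan_add h2
  rw [Real.arctan_neg, Real.arctan_one] at this
  rw [sub_eq_add_neg (Real.arctan _), this]
  congr 1
  have h3 : 1 - (s + a) / b * (-1) ≠ 0 := by
    have : 0 < 1 - (s + a) / b * (-1) := by linarith
    exact this.ne'
  rw [div_eq_div_iff h1.ne' h3]
  field_simp
  ring

lemma arctan_lip (s t : ℝ) (h : s ≤ t) : Real.arctan t - Real.arctan s ≤ t - s := by
  have := Convex.image_sub_le_mul_sub_of_deriv_le (convex_univ) (f := Real.arctan) (C := 1)
    Real.continuous_arctan.continuousOn Real.differentiable_arctan.differentiableOn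
    (fun x _ => by
      rw [Real.deriv_arctan, div_le_one (by positivity)]; nlinarith [sq_nonneg x])
    s trivial t trivial h
  linarith

lemma arctan_lower (l r : ℝ) : ∃ c : ℝ, 0 < c ∧ ∀ s t, l ≤ s → s ≤ t → t ≤ r →
    c * (t - s) ≤ Real.arctan t - Real.arctan s := by
  refine ⟨1 / (1 + (l ^ 2 + r ^ 2)), by positivity, fun s t h1 h2 h3 => ?_⟩
  refine Convex.mul_sub_le_image_sub_of_le_deriv (convex_Icc l r)
    Real.continuous_arctan.continuousOn Real.differentiable_arctan.differentiableOn
    (fun x hx => ?_) s ⟨h1, by linarith⟩ t ⟨by linarith, h3⟩ h2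
  have hx := interior_subset hx
  rw [Real.deriv_arctan]
  refine one_div_le_one_div_of_le (by positivity) ?_
  have : x ^ 2 ≤ l ^ 2 + r ^ 2 := by
    rcases le_total 0 x with h | h
    · nlinarith [hx.1, hx.2, sq_nonneg l]
    · nlinarith [hx.1, hx.2, sq_nonneg r]
  linarith

lemma qf_hess {n : ℕ} {u : EuclideanSpace ℝ (Fin n) → ℝ} (x ξ : EuclideanSpace ℝ (Fin n)) :
    qf (Hess n u x) ξ = fderiv ℝ (fderiv ℝ u) x ξ ξ := by
  rw [qf_eq_sum]
  have hξ : ξ = ∑ i, ξ i • EuclideanSpace.single i (1:ℝ) := by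
    ext j
    simp [Finset.sum_apply, Pi.single_apply]
  conv_rhs => rw [hξ]
  simp only [map_sum, map_smul, _root_.sum_apply, _root_.smul_apply,
    smul_eq_mul]
  rw [Finset.sum_comm]
  refine Finset.sum_congr rfl fun i _ => ?_
  rw [Finset.mul_sum]
  refine Finset.sum_congr rfl fun j _ => ?_
  simp only [Hess, Matrix.of_apply, iteratedFDeriv_two_apply]
  simp
  ring

lemma hess_herm {n : ℕ} {u : EuclideanSpace ℝ (Fin n) → ℝ} (hu : ContDiff ℝ 2 u)
    (x : EuclideanSpace ℝ (Fin n)) : (Hess n u x).IsHermitian := by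
  have hs : IsSymmSndFDerivAt ℝ u x := hu.contDiffAt.isSymmSndFDerivAt (by simp)
  ext i j
  simp only [Hess, Matrix.conjTranspose_apply, Matrix.of_apply, iteratedFDeriv_two_apply]
  simp
  exact hs _ _

lemma qf_dot {n : ℕ} (A : Matrix (Fin n) (Fin n) ℝ) (x : EuclideanSpace ℝ (Fin n)) :
    qf A x = x.ofLp ⬝ᵥ (A *ᵥ x.ofLp) := by
  rw [qf, real_inner_comm]
  simp [EuclideanSpace.inner_eq_star_dotProduct]

lemma eigs_eq {n : ℕ} {A : Matrix (Fin n) (Fin n) ℝ} (hA : A.IsHermitian) :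
    eigs A = hA.eigenvalues := by
  unfold eigs
  rw [dif_pos hA]

theorem bernstein_tau_gt_pi_div_four (n : ℕ) (hn : 1 ≤ n) (a b : ℝ)
    (ha0 : 0 < a) (ha1 : a < 1) (hb : b = Real.sqrt (1 - a ^ 2))
    (u : EuclideanSpace ℝ (Fin n) → ℝ)
    (hu : ContDiff ℝ 2 u)
    (hadm : ∀ x, (Hess n u x + (a + b) • (1 : Matrix (Fin n) (Fin n) ℝ)).PosDef)
    (heq : ∀ x, (Real.sqrt (a ^ 2 + 1) / b) *
        ∑ i, Real.arctan ((eigs (Hess n u x) i + a - b) / (eigs (Hess n u x) i + a + b))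
      = -u x + (1/2) * ⟪x, gradient u x⟫) :
    IsQuadPoly n u ∧
    ∃ (A : Matrix (Fin n) (Fin n) ℝ) (hA : A.IsHermitian),
      ∀ x, u x = -(Real.sqrt (a ^ 2 + 1) / b) *
          (∑ i, Real.arctan ((hA.eigenvalues i + a - b) / (hA.eigenvalues i + a + b)))
        + (1/2) * (∑ i, ∑ j, A i j * x i * x j) := by
  have hb0 : 0 < b := by
    rw [hb]; exact Real.sqrt_pos.2 (by nlinarith)
  set C := Real.sqrt (a ^ 2 + 1) / b with hC
  have hC0 : 0 < C := by
    have : 0 < Real.sqrt (a ^ 2 + 1) := Real.sqrt_pos.2 (by positivity)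
    positivity
  have hH := fun x => hess_herm hu x
  have hgrad : ∀ x, ⟪x, gradient u x⟫ = fderiv ℝ u x x := by
    intro x
    rw [real_inner_comm, gradient, InnerProductSpace.toDual_symm_apply]
  have heq' : ∀ x, ww u x = C *
      ∑ i, Real.arctan (((hH x).eigenvalues i + a - b) / ((hH x).eigenvalues i + a + b)) := by
    intro x
    have := heq x
    rw [hgrad, eigs_eq (hH x)] at this
    rw [this, ww]
  have hpos : ∀ x ξ, -(a + b) * ‖ξ‖ ^ 2 ≤ qf (Hess n u x) ξ := by
    intro x ξ
    have h1 := (hadm x).posSemidef.dotProduct_mulVec_nonneg ξ.ofLp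
    rw [star_trivial, ← qf_dot, qf_add, qf_smul, qf_one] at h1
    linarith
  have heig : ∀ x i, -(a + b) < (hH x).eigenvalues i := by
    intro x i
    have hne : (hH x).eigenvectorBasis i ≠ 0 := (hH x).eigenvectorBasis.orthonormal.ne_zero i
    have h1 := (hadm x).dotProduct_mulVec_pos (x := ((hH x).eigenvectorBasis i).ofLp)
      (by simpa using hne)
    rw [star_trivial, ← qf_dot, qf_add, qf_smul, qf_one, qf_basis] at h1
    simp at h1
    linarith
  let f : ℝ → ℝ := fun s => C * Real.arctan ((s + a) / b)
  have hwf : ∀ x, ww u x = ∑ i, f ((hH x).eigenvalues i) - C * (n * (π / 4)) := by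
    intro x
    rw [heq' x]
    simp only [f, arctan_shift a b _ hb0 (heig x _), Finset.sum_sub_distrib, ← Finset.mul_sum]
    simp
    ring
  have hfmono : Monotone f := by
    intro s t hst
    have : (s + a) / b ≤ (t + a) / b := by gcongr
    exact mul_le_mul_of_nonneg_left (Real.arctan_mono this) hC0.le
  have hfL : ∀ s t, s ≤ t → f t - f s ≤ C / b * (t - s) := by
    intro s t hst
    have h1 : (s + a) / b ≤ (t + a) / b := by gcongr
    have h2 := mul_le_mul_of_nonneg_left (arctan_lip _ _ h1) hC0.le
    calc f t - f s = C * (Real.arctan ((t + a) / b) - Real.arctan ((s + a) / b)) := by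
          simp only [f]; ring
      _ ≤ _ := h2
      _ = C / b * (t - s) := by field_simp; ring
  have hflow : ∀ l r, ∃ c, 0 < c ∧ ∀ s t, l ≤ s → s ≤ t → t ≤ r → c * (t - s) ≤ f t - f s := by
    intro l r
    obtain ⟨c, hc, h⟩ := arctan_lower ((l + a) / b) ((r + a) / b)
    refine ⟨C * c / b, by positivity, fun s t h1 h2 h3 => ?_⟩
    have := mul_le_mul_of_nonneg_left (h ((s + a) / b) ((t + a) / b) (by gcongr) (by gcongr)
      (by gcongr)) hC0.le
    calc C * c / b * (t - s) = C * (c * ((t + a) / b - (s + a) / b)) := by field_simp; ring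
      _ ≤ _ := this
      _ = f t - f s := by simp only [f]; ring
  have hc2 : Continuous (fderiv ℝ (fderiv ℝ u)) := (fderiv_c1 hu).continuous_fderiv (by norm_num)
  have hP : ∀ R, ∃ c, 0 < c ∧ PucciCond u (C / b * n) R c := by
    intro R
    obtain ⟨Λ, hΛ⟩ := (isCompact_closedBall (0 : EuclideanSpace ℝ (Fin n)) R).exists_bound_of_continuousOn
      (f := fderiv ℝ (fderiv ℝ u)) hc2.continuousOn
    obtain ⟨c, hc, hcf⟩ := hflow (-(a + b)) (Λ + 1)
    refine ⟨c, hc, ?_⟩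
    intro x y p m κ hx hm0 hm1 hκ h
    have := pucci_matrix (hH x) (hH y) p κ m hκ hm0 f (C / b) c (-(a + b)) (Λ + 1)
      (fun ξ => by rw [qf_hess, qf_hess]; exact h ξ) hfL hfmono (hpos y)
      (fun ξ => by
        rw [qf_hess]
        have h1 : fderiv ℝ (fderiv ℝ u) x ξ ξ ≤ Λ * ‖ξ‖ ^ 2 := by
          refine (le_abs_self _).trans ?_
          refine ((fderiv ℝ (fderiv ℝ u) x).le_opNorm₂ ξ ξ).trans ?_
          have := hΛ x (by simpa using hx)
          calc ‖fderiv ℝ (fderiv ℝ u) x‖ * ‖ξ‖ * ‖ξ‖ ≤ Λ * ‖ξ‖ * ‖ξ‖ := by gcongr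
            _ = Λ * ‖ξ‖ ^ 2 := by ring
        have h2 : m * ‖ξ‖ ^ 2 ≤ 1 * ‖ξ‖ ^ 2 := by gcongr
        linarith) hcf
    rw [hwf, hwf]
    linarith
  obtain ⟨x0, hx0⟩ := exists_max hu (C / b * n) (by positivity) hP (∑ _i : Fin n, C * (π / 2))
    (fun x => by
      rw [hwf]
      have h1 : ∑ i, f ((hH x).eigenvalues i) ≤ ∑ _i : Fin n, C * (π / 2) :=
        Finset.sum_le_sum fun i _ =>
          mul_le_mul_of_nonneg_left (Real.arctan_lt_pi_div_two _).le hC0.le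
      have h2 : 0 ≤ C * (n * (π / 4)) := by positivity
      linarith)
  have hconst := hopf_const hu (C / b * n) (by positivity) hP x0 hx0
  have hquad := quad_of_const hu (ww u x0) hconst
  have hfin : ∀ x, u x = - ww u 0 + (1/2) * ∑ i, ∑ j, Hess n u 0 i j * x i * x j := by
    intro x
    rw [hquad x, ← qf_eq_sum, qf_hess, hconst 0]
  refine ⟨⟨Hess n u 0, 0, - ww u 0, ?_, fun x => ?_⟩, Hess n u 0, hH 0, fun x => ?_⟩
  · have := hH 0
    rwa [Matrix.IsHermitian, Matrix.conjTranspose_eq_transpose_of_trivial] at this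
  · rw [hfin x]; simp; ring
  · rw [hfin x, heq' 0]; ring
end
end

section
/- Let n ≥ 1 and let Ω ⊆ ℝⁿ be a nonempty open connected set. Let u : Ω → ℝ be a C² function satisfying −√2 · Σ_{i=1}^n 1/(1 + λ_i(D²u(x))) = −u(x) + (1/2)⟨x, Du(x)⟩ for all x ∈ Ω, such that either D²u(x) > −I for every x ∈ Ω, or D²u(x) < −I for every x ∈ Ω. Assume that |Du| = ∞ on ∂Ω or |u| = ∞ on ∂Ω. Then Ω = ℝⁿ and u is a quadratic polynomial. -/
open Real Filter Matrix
open scoped RealInnerProductSpace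

noncomputable section

section BD
set_option linter.unusedSectionVars false
set_option linter.unusedSimpArgs false
open Topology
variable {E : Type*} [NormedAddCommGroup E] [InnerProductSpace ℝ E] [FiniteDimensional ℝ E]
  {n : ℕ}

/-- trace of an endomorphism in an orthonormal basis -/
def bdTr (b : OrthonormalBasis (Fin n) ℝ E) (H : E →L[ℝ] E) : ℝ := ∑ i, ⟪H (b i), b i⟫

lemma bdTr_add (b : OrthonormalBasis (Fin n) ℝ E) (H K : E →L[ℝ] E) :
    bdTr b (H + K) = bdTr b H + bdTr b K := by
  simp [bdTr, inner_add_left, Finset.sum_add_distrib]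

lemma bdTr_sub (b : OrthonormalBasis (Fin n) ℝ E) (H K : E →L[ℝ] E) :
    bdTr b (H - K) = bdTr b H - bdTr b K := by
  simp [bdTr, inner_sub_left, Finset.sum_sub_distrib]

lemma bdTr_smul (b : OrthonormalBasis (Fin n) ℝ E) (r : ℝ) (H : E →L[ℝ] E) :
    bdTr b (r • H) = r * bdTr b H := by
  simp [bdTr, inner_smul_left, Finset.mul_sum]

lemma bdTr_rank_one (b : OrthonormalBasis (Fin n) ℝ E) (x y : E) :
    bdTr b ((innerSL ℝ x).smulRight y) = ⟪x, y⟫ := by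
  simp only [bdTr, ContinuousLinearMap.smulRight_apply, innerSL_apply_apply, inner_smul_left]
  rw [← b.sum_inner_mul_inner x y]
  refine Finset.sum_congr rfl fun i _ => ?_
  simp [real_inner_comm]

lemma bdTr_id (b : OrthonormalBasis (Fin n) ℝ E) :
    bdTr b (ContinuousLinearMap.id ℝ E) = n := by
  simp [bdTr]

lemma bdTr_continuous (b : OrthonormalBasis (Fin n) ℝ E) : Continuous (bdTr b) := by
  unfold bdTr
  fun_prop

/-- second derivative test, necessary condition, in one variable -/
lemma bd_second_1d (g g' : ℝ → ℝ) (c : ℝ) (h1 : ∀ᶠ t in 𝓝 (0:ℝ), HasDerivAt g (g' t) t)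
    (h2 : HasDerivAt g' c 0) (hm : IsLocalMin g 0) : 0 ≤ c := by
  by_contra! hc
  have hd : deriv g =ᶠ[𝓝 0] g' := h1.mono fun t ht => ht.deriv
  have h0 : g' 0 = 0 := by
    have := hm.deriv_eq_zero
    rwa [h1.self_of_nhds.deriv] at this
  have hcont : ContinuousAt g 0 := h1.self_of_nhds.continuousAt
  have hdd : deriv (deriv g) 0 = c := by rw [hd.deriv_eq, h2.deriv]
  have hmax : IsLocalMax g 0 := isLocalMax_of_deriv_deriv_neg (by rw [hdd]; exact hc)
    (by rw [hd.self_of_nhds, h0]) hcont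
  have hconst : g =ᶠ[𝓝 0] fun _ => g 0 := by
    filter_upwards [hm, hmax] with t h1 h2 using le_antisymm h2 h1
  have : deriv g =ᶠ[𝓝 0] fun _ => 0 := by
    have := hconst.deriv
    simpa using this
  have h3 := this.deriv_eq
  rw [hdd] at h3
  simp at h3
  linarith

lemma bd_second (b : OrthonormalBasis (Fin n) ℝ E) (f : E → ℝ) (G : E → E) (H : E →L[ℝ] E) (y : E)
    (h1 : ∀ᶠ z in 𝓝 y, HasFDerivAt f (innerSL ℝ (G z)) z) (h2 : HasFDerivAt G H y)
    (hm : IsLocalMin f y) : G y = 0 ∧ 0 ≤ bdTr b H := by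
  constructor
  · have h := hm.hasFDerivAt_eq_zero h1.self_of_nhds
    have := congrArg (fun L => L (G y)) h
    simpa using this
  · refine Finset.sum_nonneg fun i _ => ?_
    have hl : ∀ t : ℝ, HasDerivAt (fun t : ℝ => y + t • b i) (b i) t := fun t => by
      simpa using ((hasDerivAt_id t).smul_const (b i)).const_add y
    have hlc : Tendsto (fun t : ℝ => y + t • b i) (𝓝 0) (𝓝 y) := by
      have := (hl 0).continuousAt.tendsto
      simpa using this
    refine bd_second_1d (fun t => f (y + t • b i)) (fun t => ⟪G (y + t • b i), b i⟫) _ ?_ ?_ ?_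
    · filter_upwards [hlc.eventually h1] with t ht
      have := ht.comp_hasDerivAt t (hl t)
      rw [innerSL_apply_apply] at this
      exact this
    · have h2' : HasFDerivAt G H (y + (0:ℝ) • b i) := by simpa using h2
      have := (h2'.comp_hasDerivAt (0:ℝ) (hl 0)).inner ℝ (hasDerivAt_const (0:ℝ) (b i))
      simpa using this
    · have := hlc.eventually hm
      simpa [IsLocalMin, IsMinFilter] using this

/-- approximation by twice differentiable functions, with convergence of gradient and Laplacian -/
def WAt (b : OrthonormalBasis (Fin n) ℝ E) (f : ℕ → E → ℝ) (G : ℕ → E → E)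
    (H : ℕ → E → E →L[ℝ] E) (y : E) (a : ℝ) (g : E) (c : ℝ) : Prop :=
  (∀ᶠ p : ℕ × E in atTop ×ˢ 𝓝 y, HasFDerivAt (f p.1) (innerSL ℝ (G p.1 p.2)) p.2) ∧
  (∀ᶠ p : ℕ × E in atTop ×ˢ 𝓝 y, HasFDerivAt (G p.1) (H p.1 p.2) p.2) ∧
  Tendsto (fun p : ℕ × E => f p.1 p.2) (atTop ×ˢ 𝓝 y) (𝓝 a) ∧
  Tendsto (fun p : ℕ × E => G p.1 p.2) (atTop ×ˢ 𝓝 y) (𝓝 g) ∧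
  Tendsto (fun p : ℕ × E => bdTr b (H p.1 p.2)) (atTop ×ˢ 𝓝 y) (𝓝 c)

def WOn (b : OrthonormalBasis (Fin n) ℝ E) (U : Set E) (a : E → ℝ) (g : E → E) (c : E → ℝ) : Prop :=
  ∃ (f : ℕ → E → ℝ) (G : ℕ → E → E) (H : ℕ → E → E →L[ℝ] E),
    ∀ y ∈ U, WAt b f G H y (a y) (g y) (c y)

lemma WOn.congr {b : OrthonormalBasis (Fin n) ℝ E} {U : Set E} {a a' : E → ℝ} {g g' : E → E}
    {c c' : E → ℝ} (h : WOn b U a g c) (ha : ∀ y ∈ U, a y = a' y) (hg : ∀ y ∈ U, g y = g' y)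
    (hc : ∀ y ∈ U, c y = c' y) : WOn b U a' g' c' := by
  obtain ⟨f, G, H, h⟩ := h
  refine ⟨f, G, H, fun y hy => ?_⟩
  rw [← ha y hy, ← hg y hy, ← hc y hy]
  exact h y hy

lemma WOn.add {b : OrthonormalBasis (Fin n) ℝ E} {U : Set E} {a a' : E → ℝ} {g g' : E → E}
    {c c' : E → ℝ} (h : WOn b U a g c) (h' : WOn b U a' g' c') :
    WOn b U (fun y => a y + a' y) (fun y => g y + g' y) (fun y => c y + c' y) := by
  obtain ⟨f, G, H, h⟩ := h
  obtain ⟨f', G', H', h'⟩ := h'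
  refine ⟨fun j y => f j y + f' j y, fun j y => G j y + G' j y, fun j y => H j y + H' j y,
    fun y hy => ?_⟩
  obtain ⟨h1, h2, h3, h4, h5⟩ := h y hy
  obtain ⟨k1, k2, k3, k4, k5⟩ := h' y hy
  refine ⟨?_, ?_, h3.add k3, h4.add k4, ?_⟩
  · filter_upwards [h1, k1] with p hp kp
    rw [map_add]
    exact hp.add kp
  · filter_upwards [h2, k2] with p hp kp using hp.add kp
  · simp only [bdTr_add]
    exact h5.add k5

lemma WOn.smul {b : OrthonormalBasis (Fin n) ℝ E} {U : Set E} {a : E → ℝ} {g : E → E}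
    {c : E → ℝ} (h : WOn b U a g c) (r : ℝ) :
    WOn b U (fun y => r * a y) (fun y => r • g y) (fun y => r * c y) := by
  obtain ⟨f, G, H, h⟩ := h
  refine ⟨fun j y => r * f j y, fun j y => r • G j y, fun j y => r • H j y,
    fun y hy => ?_⟩
  obtain ⟨h1, h2, h3, h4, h5⟩ := h y hy
  refine ⟨?_, ?_, h3.const_mul r, h4.const_smul r, ?_⟩
  · filter_upwards [h1] with p hp
    rw [map_smul]
    exact hp.const_mul r
  · filter_upwards [h2] with p hp using hp.const_smul r
  · simp only [bdTr_smul]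
    exact h5.const_mul r

lemma WOn.sq {b : OrthonormalBasis (Fin n) ℝ E} {U : Set E} {a : E → ℝ} {g : E → E}
    {c : E → ℝ} (h : WOn b U a g c) :
    WOn b U (fun y => a y * a y) (fun y => (2 * a y) • g y)
      (fun y => 2 * a y * c y + 2 * ⟪g y, g y⟫) := by
  obtain ⟨f, G, H, h⟩ := h
  refine ⟨fun j y => f j y * f j y, fun j y => (2 * f j y) • G j y,
    fun j y => (2 * f j y) • H j y + (2:ℝ) • (innerSL ℝ (G j y)).smulRight (G j y),
    fun y hy => ?_⟩
  obtain ⟨h1, h2, h3, h4, h5⟩ := h y hy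
  refine ⟨?_, ?_, h3.mul h3, (h3.const_mul 2).smul h4, ?_⟩
  · filter_upwards [h1] with p hp
    refine (hp.mul hp).congr_fderiv ?_
    refine ContinuousLinearMap.ext fun z => ?_
    simp [inner_smul_left]
    ring
  · filter_upwards [h1, h2] with p hp kp
    refine ((hp.const_mul 2).smul kp).congr_fderiv ?_
    refine ContinuousLinearMap.ext fun z => ?_
    simp [mul_smul]
  · simp only [bdTr_smul, bdTr_add, bdTr_rank_one]
    exact ((h3.const_mul 2).mul h5).add ((h4.inner h4).const_mul 2)

lemma WOn.zero (b : OrthonormalBasis (Fin n) ℝ E) (U : Set E) :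
    WOn b U (fun _ => 0) (fun _ => 0) (fun _ => 0) := by
  refine ⟨fun _ _ => 0, fun _ _ => 0, fun _ _ => 0, fun y _ => ⟨?_, ?_, ?_, ?_, ?_⟩⟩
  · refine Eventually.of_forall fun p => ?_
    simpa using hasFDerivAt_const (0:ℝ) p.2
  · refine Eventually.of_forall fun p => ?_
    exact hasFDerivAt_const (0:E) p.2
  · exact tendsto_const_nhds
  · exact tendsto_const_nhds
  · simp [bdTr]

lemma WOn.sum {b : OrthonormalBasis (Fin n) ℝ E} {U : Set E} {ι : Type*} (s : Finset ι)
    {a : ι → E → ℝ} {g : ι → E → E}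
    {c : ι → E → ℝ} (h : ∀ i, WOn b U (a i) (g i) (c i)) :
    WOn b U (fun y => ∑ i ∈ s, a i y) (fun y => ∑ i ∈ s, g i y) (fun y => ∑ i ∈ s, c i y) := by
  classical
  induction s using Finset.induction_on with
  | empty => simpa using WOn.zero b U
  | insert i s hi ih =>
    refine ((h i).add ih).congr ?_ ?_ ?_ <;> intro y _ <;> simp [hi]

lemma WOn.of_c2 (b : OrthonormalBasis (Fin n) ℝ E) {U : Set E} (hU : IsOpen U) {a : E → ℝ} {g : E → E}
    {H : E → E →L[ℝ] E} (h1 : ∀ y ∈ U, HasFDerivAt a (innerSL ℝ (g y)) y)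
    (h2 : ∀ y ∈ U, HasFDerivAt g (H y) y) (h3 : ContinuousOn H U) :
    WOn b U a g (fun y => bdTr b (H y)) := by
  refine ⟨fun _ => a, fun _ => g, fun _ => H, fun y hy => ⟨?_, ?_, ?_, ?_, ?_⟩⟩
  · have : ∀ᶠ z in 𝓝 y, z ∈ U := hU.mem_nhds hy
    filter_upwards [tendsto_snd.eventually this] with p hp using h1 _ hp
  · have : ∀ᶠ z in 𝓝 y, z ∈ U := hU.mem_nhds hy
    filter_upwards [tendsto_snd.eventually this] with p hp using h2 _ hp
  · exact (h1 y hy).continuousAt.tendsto.comp tendsto_snd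
  · exact (h2 y hy).continuousAt.tendsto.comp tendsto_snd
  · exact ((bdTr_continuous b).continuousAt.tendsto.comp
      (h3.continuousAt (hU.mem_nhds hy)).tendsto).comp tendsto_snd

lemma bd_min_strict (b : OrthonormalBasis (Fin n) ℝ E) {U : Set E} (hU : IsOpen U)
    {a : E → ℝ} {g : E → E} {c : E → ℝ}
    (h : WOn b U a g c) (ha : ContinuousOn a U) (y : E) (hy : y ∈ U) (δ : ℝ) (hδ : 0 < δ)
    (hm : ∀ᶠ z in 𝓝 y, a y + δ * ‖z - y‖ ^ 2 ≤ a z) :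
    0 ≤ √2 * c y - (1/2) * ⟪y, g y⟫ := by
  by_contra! hneg
  obtain ⟨f, G, H, h⟩ := h
  obtain ⟨h1, h2, h3, h4, h5⟩ := h y hy
  have hL : Tendsto (fun p : ℕ × E => √2 * bdTr b (H p.1 p.2) - (1/2) * ⟪p.2, G p.1 p.2⟫)
      (atTop ×ˢ 𝓝 y) (𝓝 (√2 * c y - (1/2) * ⟪y, g y⟫)) :=
    (h5.const_mul _).sub ((tendsto_snd.inner h4).const_mul _)
  have hLn := hL.eventually (gt_mem_nhds hneg)
  obtain ⟨P, hP, Q, hQ, hPQ⟩ := eventually_prod_iff.1 hLn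
  obtain ⟨ρ, hρ, hball⟩ : ∃ ρ > 0, ∀ z ∈ Metric.closedBall y ρ,
      z ∈ U ∧ Q z ∧ a y + δ * ‖z - y‖ ^ 2 ≤ a z := by
    have := ((show ∀ᶠ z in 𝓝 y, z ∈ U from hU.mem_nhds hy).and (hQ.and hm))
    obtain ⟨ρ, hρ, hb⟩ := Metric.nhds_basis_closedBall.eventually_iff.1 this
    exact ⟨ρ, hρ, fun z hz => hb hz⟩
  set K := Metric.closedBall y ρ with hK
  have hKc : IsCompact K := isCompact_closedBall y ρ
  have hη : 0 < δ * ρ ^ 2 / 3 := by positivity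
  set η := δ * ρ ^ 2 / 3 with hηd
  have e1 : ∀ᶠ p : ℕ × E in atTop ×ˢ 𝓝ˢ K, HasFDerivAt (f p.1) (innerSL ℝ (G p.1 p.2)) p.2 :=
    hKc.mem_prod_nhdsSet_of_forall fun z hz => (h z (hball z hz).1).1
  have e2 : ∀ᶠ p : ℕ × E in atTop ×ˢ 𝓝ˢ K, HasFDerivAt (G p.1) (H p.1 p.2) p.2 :=
    hKc.mem_prod_nhdsSet_of_forall fun z hz => (h z (hball z hz).1).2.1
  have e3 : ∀ᶠ p : ℕ × E in atTop ×ˢ 𝓝ˢ K, |f p.1 p.2 - a p.2| < η := by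
    refine hKc.mem_prod_nhdsSet_of_forall fun z hz => ?_
    have hz' := (h z (hball z hz).1).2.2.1
    have haz : Tendsto (fun p : ℕ × E => a p.2) (atTop ×ˢ 𝓝 z) (𝓝 (a z)) :=
      (ha.continuousAt (hU.mem_nhds (hball z hz).1)).tendsto.comp tendsto_snd
    have := (hz'.sub haz).abs
    simp only [sub_self, abs_zero] at this
    exact this.eventually (gt_mem_nhds hη)
  obtain ⟨P', hP', Q', hQ', hPQ'⟩ := eventually_prod_iff.1 (e1.and (e2.and e3))
  obtain ⟨j, hj, hj'⟩ := (hP.and hP').exists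
  have hQK : ∀ z ∈ K, Q' z := fun z hz => hQ'.self_of_nhdsSet z hz
  have hd : ∀ z ∈ K, HasFDerivAt (f j) (innerSL ℝ (G j z)) z := fun z hz =>
    (hPQ' hj' (hQK z hz)).1
  have hcont : ContinuousOn (f j) K := fun z hz => (hd z hz).continuousAt.continuousWithinAt
  have hyK : y ∈ K := Metric.mem_closedBall_self hρ.le
  obtain ⟨z, hz, hzm⟩ := hKc.exists_isMinOn ⟨y, hyK⟩ hcont
  have hzy : f j z ≤ f j y := hzm hyK
  have hzi : z ∈ Metric.ball y ρ := by
    by_contra hzb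
    have hnorm : ‖z - y‖ = ρ := by
      have h1 : dist z y ≤ ρ := hz
      have h2 : ¬ dist z y < ρ := hzb
      rw [← dist_eq_norm]; linarith
    have q1 := (hPQ' hj' (hQK z hz)).2.2
    have q2 := (hPQ' hj' (hQK y hyK)).2.2
    have q3 := (hball z hz).2.2
    rw [hnorm] at q3
    simp only at q1 q2
    rw [abs_lt] at q1 q2
    linarith
  have hzn : K ∈ 𝓝 z := mem_of_superset (Metric.isOpen_ball.mem_nhds hzi) Metric.ball_subset_closedBall
  have hlm : IsLocalMin (f j) z := hzm.isLocalMin hzn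
  have := bd_second b (f j) (G j) (H j z) z (by filter_upwards [hzn] with x hx using hd x hx)
    (hPQ' hj' (hQK z hz)).2.1 hlm
  have hlast := hPQ hj (hball z hz).2.1
  simp only [this.1, inner_zero_right] at hlast
  have : 0 ≤ √2 * bdTr b (H j z) := mul_nonneg (Real.sqrt_nonneg 2) this.2
  linarith

lemma bd_min (b : OrthonormalBasis (Fin n) ℝ E) {U : Set E} (hU : IsOpen U)
    {a : E → ℝ} {g : E → E} {c : E → ℝ}
    (h : WOn b U a g c) (ha : ContinuousOn a U) (y : E) (hy : y ∈ U)
    (hm : IsLocalMin a y) :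
    0 ≤ √2 * c y - (1/2) * ⟪y, g y⟫ := by
  have key : ∀ δ : ℝ, 0 < δ → 0 ≤ √2 * (c y + 2 * n * δ) - (1/2) * ⟪y, g y⟫ := by
    intro δ hδ
    have hq : WOn b U (fun z => δ * ⟪z - y, z - y⟫) (fun z => (2 * δ) • (z - y))
        (fun z => bdTr b ((2 * δ) • ContinuousLinearMap.id ℝ E)) := by
      refine WOn.of_c2 b hU (H := fun _ => (2 * δ) • ContinuousLinearMap.id ℝ E) ?_ ?_
        continuousOn_const
      · intro z _
        have h0 : HasFDerivAt (fun z : E => z - y) (ContinuousLinearMap.id ℝ E) z :=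
          (hasFDerivAt_id z).sub_const y
        refine ((h0.inner ℝ h0).const_mul δ).congr_fderiv ?_
        refine ContinuousLinearMap.ext fun x => ?_
        simp [inner_sub_left, inner_sub_right, inner_smul_left]
        rw [real_inner_comm x z, real_inner_comm x y]
        ring
      · intro z _
        exact ((hasFDerivAt_id z).sub_const y).const_smul (2 * δ)
    have h' := h.add hq
    have := bd_min_strict b hU h' (by fun_prop) y hy δ hδ (by
      filter_upwards [hm] with z hz
      simp only [sub_self, inner_zero_left, real_inner_self_eq_norm_sq]
      linarith)
    simp only [sub_self, smul_zero, add_zero, bdTr_smul, bdTr_id] at this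
    have e : (2 * n * δ : ℝ) = 2 * δ * n := by ring
    rwa [e]
  have hlim : Tendsto (fun δ : ℝ => √2 * (c y + 2 * n * δ) - (1/2) * ⟪y, g y⟫) (𝓝[>] 0)
      (𝓝 (√2 * (c y + 2 * n * 0) - (1/2) * ⟪y, g y⟫)) := by
    refine Tendsto.mono_left ?_ nhdsWithin_le_nhds
    exact Continuous.tendsto (by fun_prop) 0
  have := ge_of_tendsto hlim (by filter_upwards [self_mem_nhdsWithin] with δ hδ using key δ hδ)
  simpa using this


lemma bd_diffq {F : Type*} [NormedAddCommGroup F] [NormedSpace ℝ F] (φ : E → F) (φ' : E →L[ℝ] F)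
    (y : E) (h : HasStrictFDerivAt φ φ' y) (e : E → E) (he : ContinuousAt e y) (s : ℕ → ℝ)
    (hs : Tendsto s atTop (𝓝 0)) (hs0 : ∀ j, s j ≠ 0) :
    Tendsto (fun p : ℕ × E => (s p.1)⁻¹ • (φ (p.2 + s p.1 • e p.2) - φ p.2)) (atTop ×ˢ 𝓝 y)
      (𝓝 (φ' (e y))) := by
  have hs' : Tendsto (fun p : ℕ × E => s p.1) (atTop ×ˢ 𝓝 y) (𝓝 0) := hs.comp tendsto_fst
  have he' : Tendsto (fun p : ℕ × E => e p.2) (atTop ×ˢ 𝓝 y) (𝓝 (e y)) :=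
    he.tendsto.comp tendsto_snd
  have hm : Tendsto (fun p : ℕ × E => (p.2 + s p.1 • e p.2, p.2)) (atTop ×ˢ 𝓝 y) (𝓝 (y, y)) := by
    rw [nhds_prod_eq]
    refine Tendsto.prodMk ?_ tendsto_snd
    have := (tendsto_snd (f := (atTop : Filter ℕ)) (g := 𝓝 y)).add (hs'.smul he')
    simpa using this
  have ho := h.isLittleO.comp_tendsto hm
  have hsi : (fun p : ℕ × E => (s p.1)⁻¹) =O[atTop ×ˢ 𝓝 y] (fun p : ℕ × E => (s p.1)⁻¹) :=
    Asymptotics.isBigO_refl _ _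
  have h1 := hsi.smul_isLittleO ho
  have h2 : (fun p : ℕ × E => (s p.1)⁻¹ • (φ (p.2 + s p.1 • e p.2) - φ p.2) - φ' (e p.2))
      =o[atTop ×ˢ 𝓝 y] (fun p : ℕ × E => e p.2) := by
    refine h1.congr ?_ ?_
    · intro p
      simp only [Function.comp, add_sub_cancel_left, map_smul, smul_sub]
      rw [smul_smul, inv_mul_cancel₀ (hs0 _), one_smul]
    · intro p
      simp only [Function.comp, add_sub_cancel_left]
      rw [smul_smul, inv_mul_cancel₀ (hs0 _), one_smul]
  have h3 : Tendsto (fun p : ℕ × E => (s p.1)⁻¹ • (φ (p.2 + s p.1 • e p.2) - φ p.2) - φ' (e p.2))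
      (atTop ×ˢ 𝓝 y) (𝓝 0) := by
    have := h2.trans_isBigO (he'.isBigO_one ℝ)
    exact (Asymptotics.isLittleO_one_iff ℝ).1 this
  have h4 := h3.add ((φ'.continuous.tendsto _).comp he')
  simpa using h4

lemma bd_strict {F : Type*} [NormedAddCommGroup F] [NormedSpace ℝ F] {U : Set E} (hU : IsOpen U)
    {φ : E → F} {φ' : E → E →L[ℝ] F} (h : ∀ y ∈ U, HasFDerivAt φ (φ' y) y)
    (hc : ContinuousOn φ' U) : ∀ y ∈ U, HasStrictFDerivAt φ (φ' y) y := fun y hy =>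
  hasStrictFDerivAt_of_hasFDerivAt_of_continuousAt
    (by filter_upwards [hU.mem_nhds hy] with z hz using h z hz) (hc.continuousAt (hU.mem_nhds hy))

lemma bd_family (b : OrthonormalBasis (Fin n) ℝ E) {U : Set E} (hU : IsOpen U)
    {v : E → ℝ} {X T : E → E} {B : E → E →L[ℝ] E}
    (hv : ∀ y ∈ U, HasFDerivAt v (innerSL ℝ (X y)) y)
    (hX : ∀ y ∈ U, HasFDerivAt X (B y) y) (hB : ContinuousOn B U)
    (hτ : ∀ y ∈ U, HasFDerivAt (fun y => bdTr b (B y)) (innerSL ℝ (T y)) y)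
    (hT : ContinuousOn T U) (σ : ℝ) (e : E) :
    WOn b U (fun y => ⟪X y, σ • y + e⟫) (fun y => B y (σ • y + e) + σ • X y)
      (fun y => ⟪T y, σ • y + e⟫ + 2 * σ * bdTr b (B y)) := by
  have hXc : ContinuousOn X U := fun y hy => (hX y hy).continuousAt.continuousWithinAt
  have sv := bd_strict hU hv ((innerSL ℝ).continuous.comp_continuousOn hXc)
  have sX := bd_strict hU hX hB
  have sτ := bd_strict hU hτ ((innerSL ℝ).continuous.comp_continuousOn hT)
  set s : ℕ → ℝ := fun j => 1 / ((j:ℝ) + 1) with hsd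
  have hs : Tendsto s atTop (𝓝 0) := tendsto_one_div_add_atTop_nhds_zero_nat
  have hs0 : ∀ j, s j ≠ 0 := fun j => by positivity
  set m : ℕ → E → E := fun j y => y + s j • (σ • y + e) with hmd
  refine ⟨fun j y => (s j)⁻¹ * (v (m j y) - v y),
    fun j y => (s j)⁻¹ • ((1 + s j * σ) • X (m j y) - X y),
    fun j y => (s j)⁻¹ • ((1 + s j * σ) • (1 + s j * σ) • B (m j y) - B y), fun y hy => ?_⟩
  have hmt : Tendsto (fun p : ℕ × E => m p.1 p.2) (atTop ×ˢ 𝓝 y) (𝓝 y) := by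
    have h1 : Tendsto (fun p : ℕ × E => s p.1) (atTop ×ˢ 𝓝 y) (𝓝 0) := hs.comp tendsto_fst
    have h2 : Tendsto (fun p : ℕ × E => p.2) (atTop ×ˢ 𝓝 y) (𝓝 y) := tendsto_snd
    have := h2.add (h1.smul ((h2.const_smul σ).add_const e))
    rw [zero_smul, add_zero] at this
    exact this
  have hmU : ∀ᶠ p : ℕ × E in atTop ×ˢ 𝓝 y, m p.1 p.2 ∈ U := hmt.eventually (hU.mem_nhds hy)
  have hyU : ∀ᶠ p : ℕ × E in atTop ×ˢ 𝓝 y, p.2 ∈ U := tendsto_snd.eventually (hU.mem_nhds hy)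
  have hmd' : ∀ j z, HasFDerivAt (m j) ((1 + s j * σ) • ContinuousLinearMap.id ℝ E) z := by
    intro j z
    have h0 : HasFDerivAt (fun z : E => z) (ContinuousLinearMap.id ℝ E) z := hasFDerivAt_id z
    refine (h0.add (((h0.const_smul σ).add_const e).const_smul (s j))).congr_fderiv ?_
    refine ContinuousLinearMap.ext fun x => ?_
    simp [add_smul, mul_smul]
  have hec : ContinuousAt (fun z : E => σ • z + e) y := by fun_prop
  have h1s : Tendsto (fun p : ℕ × E => 1 + s p.1 * σ) (atTop ×ˢ 𝓝 y) (𝓝 1) := by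
    have h1 : Tendsto (fun p : ℕ × E => s p.1) (atTop ×ˢ 𝓝 y) (𝓝 0) := hs.comp tendsto_fst
    simpa using (h1.mul_const σ).const_add 1
  have hXm : Tendsto (fun p : ℕ × E => X (m p.1 p.2)) (atTop ×ˢ 𝓝 y) (𝓝 (X y)) :=
    (hX y hy).continuousAt.tendsto.comp hmt
  have hτm : Tendsto (fun p : ℕ × E => bdTr b (B (m p.1 p.2))) (atTop ×ˢ 𝓝 y)
      (𝓝 (bdTr b (B y))) :=
    (hτ y hy).continuousAt.tendsto.comp hmt
  refine ⟨?_, ?_, ?_, ?_, ?_⟩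
  · filter_upwards [hmU, hyU] with p hp kp
    refine ((((hv _ hp).comp p.2 (hmd' p.1 p.2)).sub (hv _ kp)).const_mul _).congr_fderiv ?_
    refine ContinuousLinearMap.ext fun x => ?_
    simp [inner_smul_left, inner_sub_left, inner_smul_right]
  · filter_upwards [hmU, hyU] with p hp kp
    refine (((((hX _ hp).comp p.2 (hmd' p.1 p.2)).const_smul (1 + s p.1 * σ)).sub
      (hX _ kp)).const_smul _).congr_fderiv ?_
    refine ContinuousLinearMap.ext fun x => ?_
    simp
  · have := bd_diffq v _ y (sv y hy) _ hec s hs hs0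
    rw [innerSL_apply_apply] at this
    exact this
  · have := (bd_diffq X _ y (sX y hy) _ hec s hs hs0).add (hXm.const_smul σ)
    refine this.congr fun p => ?_
    have h0 := hs0 p.1
    simp only [hmd, add_smul, smul_sub, smul_add, one_smul, mul_smul]
    rw [smul_smul (s p.1)⁻¹ (s p.1), inv_mul_cancel₀ h0, one_smul]
    abel
  · have := (bd_diffq _ _ y (sτ y hy) _ hec s hs hs0).add
      ((hτm.mul (h1s.add_const 1)).const_mul σ)
    have e1 : (innerSL ℝ (T y)) (σ • y + e) + σ * (bdTr b (B y) * (1 + 1))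
        = ⟪T y, σ • y + e⟫ + 2 * σ * bdTr b (B y) := by
      simp only [innerSL_apply_apply]; ring
    rw [e1] at this
    refine this.congr fun p => ?_
    have h0 := hs0 p.1
    simp only [bdTr_smul, bdTr_sub, smul_eq_mul, hmd]
    field_simp
    ring

lemma bd_lemmaY (b : OrthonormalBasis (Fin n) ℝ E) {U : Set E} (hU : IsOpen U)
    {v : E → ℝ} {X : E → E} {B : E → E →L[ℝ] E}
    (hv : ∀ y ∈ U, HasFDerivAt v (innerSL ℝ (X y)) y)
    (hX : ∀ y ∈ U, HasFDerivAt X (B y) y) (hB : ContinuousOn B U)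
    (hsymm : ∀ y ∈ U, ∀ p q, ⟪B y p, q⟫ = ⟪p, B y q⟫)
    (heq : ∀ y ∈ U, √2 * bdTr b (B y) = (1/2) * ⟪y, X y⟫ - v y)
    {Φ : E → ℝ} {P : E → E} {Q : E → E →L[ℝ] E}
    (hΦ : ∀ y ∈ U, HasFDerivAt Φ (innerSL ℝ (P y)) y)
    (hP : ∀ y ∈ U, HasFDerivAt P (Q y) y) (hQ : ContinuousOn Q U) (ε : ℝ) (y : E) (hy : y ∈ U)
    (hm : IsLocalMin (fun y => (1/2) * ⟪y, X y⟫ - v y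
      + ε * (v y * v y + 4 * ‖X y‖ ^ 2) + Φ y) y) :
    0 ≤ ε * (-2 * (v y * v y) + (2 * √2 - 4) * ‖X y‖ ^ 2 + 8 * √2 * ∑ i, ‖B y (b i)‖ ^ 2)
      + (√2 * bdTr b (Q y) - (1/2) * ⟪y, P y⟫) := by
  have hs2 : √2 * √2 = 2 := Real.mul_self_sqrt (by norm_num)
  have hs2' : √2 ≠ 0 := by positivity
  have hXc : ContinuousOn X U := fun y hy => (hX y hy).continuousAt.continuousWithinAt
  have hvc : ContinuousOn v U := fun y hy => (hv y hy).continuousAt.continuousWithinAt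
  have hΦc : ContinuousOn Φ U := fun y hy => (hΦ y hy).continuousAt.continuousWithinAt
  set T : E → E := fun y => (√2 / 4) • (B y y - X y) with hTd
  have hT : ContinuousOn T U := by
    have : ContinuousOn (fun y => B y y) U := hB.clm_apply continuousOn_id
    exact (this.sub hXc).const_smul _
  have hτ : ∀ y ∈ U, HasFDerivAt (fun y => bdTr b (B y)) (innerSL ℝ (T y)) y := by
    intro z hz
    have h1 : HasFDerivAt (fun y => (√2 / 2) * ((1/2) * ⟪y, X y⟫ - v y)) (innerSL ℝ (T z)) z := by
      have h0 : HasFDerivAt (fun z : E => z) (ContinuousLinearMap.id ℝ E) z := hasFDerivAt_id z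
      refine ((((h0.inner ℝ (hX z hz)).const_mul (1/2)).sub (hv z hz)).const_mul
        (√2/2)).congr_fderiv ?_
      refine ContinuousLinearMap.ext fun x => ?_
      simp [hTd, inner_smul_left, inner_sub_left]
      rw [← hsymm z hz z x, real_inner_comm (X z) x]
      ring
    refine h1.congr_of_eventuallyEq ?_
    filter_upwards [hU.mem_nhds hz] with x hx
    rw [← heq x hx, ← mul_assoc]
    have : √2 / 2 * √2 = 1 := by linarith
    rw [this, one_mul]
  have W1 := bd_family b hU hv hX hB hτ hT 1 0
  have Wk := fun k => (bd_family b hU hv hX hB hτ hT 0 (b k)).sq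
  have Wv := WOn.of_c2 b hU hv hX hB
  have WΦ := WOn.of_c2 b hU hΦ hP hQ
  have W := (((W1.smul (1/2)).add (Wv.smul (-1))).add
    ((Wv.sq.add ((WOn.sum Finset.univ Wk).smul 4)).smul ε)).add WΦ
  have hsum : ∀ x : E, ∑ k, ⟪x, b k⟫ * ⟪x, b k⟫ = ‖x‖ ^ 2 := by
    intro x
    rw [← real_inner_self_eq_norm_sq, ← b.sum_inner_mul_inner x x]
    exact Finset.sum_congr rfl fun i _ => by rw [real_inner_comm x (b i)]
  have W' := bd_min b hU (W.congr (a' := fun y => (1/2) * ⟪y, X y⟫ - v y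
      + ε * (v y * v y + 4 * ‖X y‖ ^ 2) + Φ y) (by
      intro x hx
      simp only [zero_smul, zero_add, one_smul, add_zero, hsum]
      rw [real_inner_comm]; ring) (fun _ _ => rfl) (fun _ _ => rfl)) (by fun_prop) y hy hm
  refine W'.trans (le_of_eq ?_)
  have hq : ∀ p q : E, ∑ k, ⟪p, b k⟫ * ⟪q, b k⟫ = ⟪p, q⟫ := by
    intro p q
    rw [← b.sum_inner_mul_inner p q]
    exact Finset.sum_congr rfl fun i _ => by rw [real_inner_comm q (b i)]
  have hBX : ∑ k, (2 * ⟪X y, b k⟫) • B y (b k) = (2:ℝ) • B y (X y) := by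
    conv_rhs => rw [← b.sum_repr' (X y)]
    simp only [map_sum, map_smul, Finset.smul_sum, mul_smul]
    exact Finset.sum_congr rfl fun i _ => by rw [real_inner_comm]
  have hTs : ∑ k, (2 * ⟪X y, b k⟫ * ⟪T y, b k⟫ + 2 * ‖B y (b k)‖ ^ 2)
      = 2 * ⟪X y, T y⟫ + 2 * ∑ k, ‖B y (b k)‖ ^ 2 := by
    rw [Finset.sum_add_distrib, ← Finset.mul_sum, ← hq, Finset.mul_sum]
    congr 1
    rw [Finset.mul_sum]
    exact Finset.sum_congr rfl fun i _ => by ring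
  simp only [zero_smul, zero_add, one_smul, add_zero, mul_zero, zero_mul, hBX,
    real_inner_self_eq_norm_sq, hTs, inner_add_right, inner_smul_right, mul_one]
  have hTy : √2 * ⟪T y, y⟫ = (1/2) * (⟪y, B y y⟫ - ⟪y, X y⟫) := by
    simp only [hTd, inner_smul_left, inner_sub_left, hsymm y hy y y, real_inner_comm y (X y)]
    simp
    linear_combination (1/4) * (⟪y, B y y⟫ - ⟪y, X y⟫) * hs2
  have hTX : √2 * ⟪X y, T y⟫ = (1/2) * (⟪y, B y (X y)⟫ - ‖X y‖ ^ 2) := by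
    simp only [hTd, inner_smul_right, inner_sub_right, real_inner_self_eq_norm_sq]
    rw [← real_inner_comm (X y) (B y y), hsymm y hy]
    linear_combination (1/4) * (⟪y, B y (X y)⟫ - ‖X y‖ ^ 2) * hs2
  have hE := heq y hy
  linear_combination (1/2) * hTy + 8 * ε * hTX + 2 * ε * v y * hE


lemma bd_cs (B : E →L[ℝ] E) (hs : ∀ p q, ⟪B p, q⟫ = ⟪p, B q⟫) (hp : ∀ p, 0 ≤ ⟪B p, p⟫) (p q : E) :
    ⟪B p, q⟫ ^ 2 ≤ ⟪B p, p⟫ * ⟪B q, q⟫ := by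
  have h : ∀ t : ℝ, 0 ≤ ⟪B q, q⟫ * (t * t) + (2 * ⟪B p, q⟫) * t + ⟪B p, p⟫ := by
    intro t
    refine (hp (p + t • q)).trans (le_of_eq ?_)
    have e : ⟪B q, p⟫ = ⟪B p, q⟫ := by rw [hs q p, real_inner_comm]
    simp only [map_add, map_smul, inner_add_left, inner_add_right, inner_smul_left,
      inner_smul_right, e]
    simp
    ring
  have := discrim_le_zero h
  unfold discrim at this
  nlinarith

lemma bd_hs (b : OrthonormalBasis (Fin n) ℝ E) (B : E →L[ℝ] E)
    (hs : ∀ p q, ⟪B p, q⟫ = ⟪p, B q⟫) (hp : ∀ p, 0 ≤ ⟪B p, p⟫) :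
    ∑ i, ‖B (b i)‖ ^ 2 ≤ bdTr b B ^ 2 := by
  rw [pow_two (bdTr b B), bdTr, Finset.sum_mul_sum]
  refine Finset.sum_le_sum fun i _ => ?_
  rw [← b.sum_sq_inner_left (B (b i))]
  exact Finset.sum_le_sum fun j _ => by
    simpa using bd_cs B hs hp (b i) (b j)

structure BDSetup (b : OrthonormalBasis (Fin n) ℝ E) (Ω : Set E) (w : E → ℝ) (N : E → E)
    (A : E → E →L[ℝ] E) : Prop where
  hΩ : IsOpen Ω
  hw : ∀ x ∈ Ω, HasFDerivAt w (innerSL ℝ (N x)) x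
  hN : ∀ x ∈ Ω, HasFDerivAt N (A x) x
  hA : ContinuousOn A Ω
  symm : ∀ x ∈ Ω, ∀ p q, ⟪A x p, q⟫ = ⟪p, A x q⟫
  pos : ∀ x ∈ Ω, ∀ p, p ≠ 0 → 0 < ⟪A x p, p⟫
  heq : ∀ x ∈ Ω, ∀ B : E →L[ℝ] E, (∀ p, A x (B p) = p) →
    w x - (1/2) * ⟪x, N x⟫ = √2 * bdTr b B

lemma bd_equiv (A : E →L[ℝ] E) (h : ∀ p, p ≠ 0 → 0 < ⟪A p, p⟫) :
    ∃ e : E ≃L[ℝ] E, (e : E →L[ℝ] E) = A := by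
  have hi : Function.Injective A.toLinearMap := by
    rw [← LinearMap.ker_eq_bot, LinearMap.ker_eq_bot']
    intro p hp
    by_contra hne
    have h1 := h p hne
    have hp' : A p = 0 := hp
    rw [hp', inner_zero_left] at h1
    exact lt_irrefl _ h1
  refine ⟨(LinearEquiv.ofInjectiveEndo A.toLinearMap hi).toContinuousLinearEquiv, ?_⟩
  ext p
  rfl

lemma bd_chart {b : OrthonormalBasis (Fin n) ℝ E} {Ω : Set E} {w : E → ℝ} {N : E → E}
    {A : E → E →L[ℝ] E} (S : BDSetup b Ω w N A) (x₁ : E) (hx : x₁ ∈ Ω) :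
    ∃ (U : Set E) (X : E → E) (B : E → E →L[ℝ] E), IsOpen U ∧ N x₁ ∈ U ∧
      (∀ y ∈ U, X y ∈ Ω ∧ N (X y) = y ∧ HasFDerivAt X (B y) y ∧ ∀ p, A (X y) (B y p) = p) ∧
      ContinuousOn B U ∧ ∀ᶠ x in 𝓝 x₁, X (N x) = x := by
  have hst := bd_strict S.hΩ S.hN S.hA
  obtain ⟨e, he⟩ := bd_equiv (A x₁) (S.pos x₁ hx)
  have hs : HasStrictFDerivAt N (e : E →L[ℝ] E) x₁ := by rw [he]; exact hst x₁ hx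
  let φ := hs.toOpenPartialHomeomorph N
  have hφ : ∀ z, φ z = N z := fun z => rfl
  have hx₁s : x₁ ∈ φ.source := hs.mem_toOpenPartialHomeomorph_source
  refine ⟨φ.target ∩ φ.symm ⁻¹' Ω, φ.symm, fun y => (A (φ.symm y)).inverse,
    φ.isOpen_inter_preimage_symm S.hΩ, ?_, ?_, ?_, ?_⟩
  · refine ⟨φ.map_source hx₁s, ?_⟩
    have : φ.symm (N x₁) = x₁ := φ.left_inv hx₁s
    simp only [Set.mem_preimage, this, hx]
  · rintro y ⟨hy1, hy2⟩
    obtain ⟨e', he'⟩ := bd_equiv (A (φ.symm y)) (S.pos _ hy2)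
    refine ⟨hy2, φ.right_inv hy1, ?_, ?_⟩
    · change HasFDerivAt φ.symm (A (φ.symm y)).inverse y
      rw [← he', ContinuousLinearMap.inverse_equiv]
      refine φ.hasFDerivAt_symm hy1 ?_
      rw [he']
      exact S.hN _ hy2
    · intro p
      change A (φ.symm y) ((A (φ.symm y)).inverse p) = p
      rw [← he', ContinuousLinearMap.inverse_equiv]
      simp
  · rintro y ⟨hy1, hy2⟩
    obtain ⟨e', he'⟩ := bd_equiv (A (φ.symm y)) (S.pos _ hy2)
    have h1 : ContinuousAt (ContinuousLinearMap.inverse : (E →L[ℝ] E) → (E →L[ℝ] E))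
        (A (φ.symm y)) := by
      rw [← he']
      exact (contDiffAt_map_inverse (𝕜 := ℝ) (n := 0) e').continuousAt
    have h2 : ContinuousAt A (φ.symm y) := S.hA.continuousAt (S.hΩ.mem_nhds hy2)
    have h3 : ContinuousAt φ.symm y := φ.symm.continuousAt hy1
    exact (ContinuousAt.comp (f := fun y => A (φ.symm y)) h1
      (ContinuousAt.comp (f := φ.symm) h2 h3)).continuousWithinAt
  · filter_upwards [φ.open_source.mem_nhds hx₁s] with x hx'
    exact φ.left_inv hx'

/-- local facts in the chart -/
lemma bd_chart_facts {b : OrthonormalBasis (Fin n) ℝ E} {Ω : Set E} {w : E → ℝ} {N : E → E}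
    {A : E → E →L[ℝ] E} (S : BDSetup b Ω w N A) {U : Set E} {X : E → E} {B : E → E →L[ℝ] E}
    (hc : ∀ y ∈ U, X y ∈ Ω ∧ N (X y) = y ∧ HasFDerivAt X (B y) y ∧ ∀ p, A (X y) (B y p) = p) :
    (∀ y ∈ U, HasFDerivAt (fun y => ⟪y, X y⟫ - w (X y)) (innerSL ℝ (X y)) y) ∧
    (∀ y ∈ U, ∀ p q, ⟪B y p, q⟫ = ⟪p, B y q⟫) ∧
    (∀ y ∈ U, ∀ p, 0 ≤ ⟪B y p, p⟫) ∧
    (∀ y ∈ U, √2 * bdTr b (B y) = (1/2) * ⟪y, X y⟫ - (⟪y, X y⟫ - w (X y))) := by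
  refine ⟨?_, ?_, ?_, ?_⟩
  · intro y hy
    obtain ⟨h1, h2, h3, h4⟩ := hc y hy
    have h0 : HasFDerivAt (fun z : E => z) (ContinuousLinearMap.id ℝ E) y := hasFDerivAt_id y
    have hw := (S.hw _ h1).comp y h3
    refine ((h0.inner ℝ h3).sub hw).congr_fderiv ?_
    refine ContinuousLinearMap.ext fun x => ?_
    simp [h2]
    rw [real_inner_comm]
  · intro y hy p q
    obtain ⟨h1, h2, h3, h4⟩ := hc y hy
    rw [← h4 q, ← S.symm _ h1, h4 p, h4 q]
  · intro y hy p
    obtain ⟨h1, h2, h3, h4⟩ := hc y hy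
    by_cases h : B y p = 0
    · simp [h]
    · have := S.pos _ h1 _ h
      rw [h4, real_inner_comm] at this
      exact this.le
  · intro y hy
    obtain ⟨h1, h2, h3, h4⟩ := hc y hy
    rw [← S.heq _ h1 _ h4, h2, real_inner_comm]
    ring

lemma bd_theta_pos {b : OrthonormalBasis (Fin n) ℝ E} {Ω : Set E} {w : E → ℝ} {N : E → E}
    {A : E → E →L[ℝ] E} (S : BDSetup b Ω w N A) (x : E) (hx : x ∈ Ω) :
    0 ≤ w x - (1/2) * ⟪x, N x⟫ := by
  obtain ⟨U, X, B, hU, hyU, hc, hB, hX⟩ := bd_chart S x hx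
  obtain ⟨f1, f2, f3, f4⟩ := bd_chart_facts S hc
  have h4 := (hc _ hyU).2.2.2
  have hXx := hX.self_of_nhds
  rw [hXx] at h4
  rw [S.heq x hx _ h4]
  exact mul_nonneg (Real.sqrt_nonneg 2) (Finset.sum_nonneg fun i _ => f3 _ hyU _)

/-- the maximum principle on Ω -/
lemma bd_lemmaX {b : OrthonormalBasis (Fin n) ℝ E} {Ω : Set E} {w : E → ℝ} {N : E → E}
    {A : E → E →L[ℝ] E} (S : BDSetup b Ω w N A) (x : E) (hx : x ∈ Ω) (ε : ℝ) (hε : 0 < ε)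
    (hm : IsLocalMin (fun x => w x - (1/2) * ⟪x, N x⟫
      + ε * ((⟪N x, x⟫ - w x) * (⟪N x, x⟫ - w x) + 4 * ‖x‖ ^ 2) + ε * ‖N x‖ ^ 2) x) :
    2 * (⟪N x, x⟫ - w x) ^ 2 + ‖x‖ ^ 2 + ‖N x‖ ^ 2 ≤
      4 * √2 * (w x - (1/2) * ⟪x, N x⟫) ^ 2 + 2 * √2 * n := by
  obtain ⟨U, X, B, hU, hyU, hc, hB, hX⟩ := bd_chart S x hx
  obtain ⟨f1, f2, f3, f4⟩ := bd_chart_facts S hc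
  have hXx := hX.self_of_nhds
  have hXd : ∀ y ∈ U, HasFDerivAt X (B y) y := fun y hy => (hc y hy).2.2.1
  have hkey := bd_lemmaY b hU f1 hXd hB f2 f4
    (Φ := fun y => ε * ‖y‖ ^ 2) (P := fun y => (2 * ε) • y)
    (Q := fun _ => (2 * ε) • ContinuousLinearMap.id ℝ E) (by
      intro y hy
      have h0 : HasFDerivAt (fun z : E => z) (ContinuousLinearMap.id ℝ E) y := hasFDerivAt_id y
      refine (h0.norm_sq.const_mul ε).congr_fderiv ?_
      refine ContinuousLinearMap.ext fun x => ?_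
      simp [inner_smul_left]
      ring) (by
      intro y hy
      exact (hasFDerivAt_id y).const_smul (2 * ε)) continuousOn_const ε (N x) hyU (by
      have hXt : Tendsto X (𝓝 (N x)) (𝓝 x) := by
        have := (hXd _ hyU).continuousAt.tendsto
        rwa [hXx] at this
      have := hXt.eventually hm
      filter_upwards [this, hU.mem_nhds hyU] with y hy hyU'
      have hNX := (hc y hyU').2.1
      rw [hXx]
      rw [hNX] at hy
      rw [real_inner_comm y (X y)] at hy
      rw [real_inner_comm (N x) x] at hy
      linarith)
  rw [hXx] at hkey
  simp only [bdTr_smul, bdTr_id, inner_smul_right, real_inner_self_eq_norm_sq] at hkey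
  have hhs := bd_hs b (B (N x)) (f2 _ hyU) (f3 _ hyU)
  have h4 := (hc _ hyU).2.2.2
  rw [hXx] at h4
  rw [S.heq x hx _ h4, mul_pow, Real.sq_sqrt (by norm_num)]
  have hs0 : 0 ≤ √2 := Real.sqrt_nonneg 2
  have hs2 : √2 ≤ 3/2 := by
    rw [Real.sqrt_le_left (by norm_num)]; norm_num
  have h5 := mul_le_mul_of_nonneg_left hhs hs0
  have h6 : 0 ≤ ε * (-2 * ((⟪N x, x⟫ - w x) * (⟪N x, x⟫ - w x)) + (2 * √2 - 4) * ‖x‖ ^ 2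
      + 8 * √2 * ∑ i, ‖B (N x) (b i)‖ ^ 2 + (2 * √2 * n - ‖N x‖ ^ 2)) := by
    refine hkey.trans (le_of_eq ?_)
    ring
  have h7 := nonneg_of_mul_nonneg_right h6 hε
  have h8 : (2 * √2 - 4) * ‖x‖ ^ 2 ≤ - ‖x‖ ^ 2 := by nlinarith [sq_nonneg ‖x‖]
  nlinarith


def BDBlow (Ω : Set E) (w : E → ℝ) (N : E → E) : Prop :=
  ∀ p ∈ frontier Ω, ∀ z : ℕ → E, (∀ k, z k ∈ Ω) → Tendsto z atTop (𝓝 p) →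
    ∀ R : ℝ, ¬ ∀ k, ‖N (z k)‖ ≤ R ∧ |w (z k)| ≤ R

section glob
variable {b : OrthonormalBasis (Fin n) ℝ E} {Ω : Set E} {w : E → ℝ} {N : E → E}
    {A : E → E →L[ℝ] E}

lemma BDSetup.contw (S : BDSetup b Ω w N A) : ContinuousOn w Ω :=
  fun x hx => (S.hw x hx).continuousAt.continuousWithinAt

lemma BDSetup.contN (S : BDSetup b Ω w N A) : ContinuousOn N Ω :=
  fun x hx => (S.hN x hx).continuousAt.continuousWithinAt

lemma bd_compact (S : BDSetup b Ω w N A) (hB : BDBlow Ω w N) (R : ℝ) :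
    IsCompact {x | x ∈ Ω ∧ w x - (1/2) * ⟪x, N x⟫ ≤ R ∧ |⟪N x, x⟫ - w x| ≤ R ∧ ‖x‖ ≤ R ∧
      ‖N x‖ ≤ R} := by
  refine Metric.isCompact_of_isClosed_isBounded ?_ ?_
  · refine IsSeqClosed.isClosed ?_
    intro z p hz hp
    have hpc : p ∈ closure Ω := mem_closure_of_tendsto hp (Eventually.of_forall fun k => (hz k).1)
    have hpΩ : p ∈ Ω := by
      by_contra hpn
      have hpf : p ∈ frontier Ω := by
        rw [frontier, S.hΩ.interior_eq]; exact ⟨hpc, hpn⟩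
      refine hB p hpf z (fun k => (hz k).1) hp (3 * R) fun k => ?_
      obtain ⟨h1, h2, h3, h4, h5⟩ := hz k
      have h6 := bd_theta_pos S (z k) h1
      have hR : 0 ≤ R := (norm_nonneg _).trans h4
      refine ⟨by linarith, ?_⟩
      rw [abs_le] at h3 ⊢
      rw [real_inner_comm] at h2 h6
      constructor <;> linarith
    have hNc : Tendsto (fun k => N (z k)) atTop (𝓝 (N p)) :=
      (S.hN p hpΩ).continuousAt.tendsto.comp hp
    have hwc : Tendsto (fun k => w (z k)) atTop (𝓝 (w p)) :=
      (S.hw p hpΩ).continuousAt.tendsto.comp hp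
    refine ⟨hpΩ, ?_, ?_, ?_, ?_⟩
    · exact le_of_tendsto' (hwc.sub ((hp.inner hNc).const_mul _)) fun k => (hz k).2.1
    · exact le_of_tendsto' ((hNc.inner hp).sub hwc).abs fun k => (hz k).2.2.1
    · exact le_of_tendsto' hp.norm fun k => (hz k).2.2.2.1
    · exact le_of_tendsto' hNc.norm fun k => (hz k).2.2.2.2
  · refine Metric.isBounded_closedBall.subset (t := Metric.closedBall 0 R) ?_
    intro x hx
    simpa using hx.2.2.2.1

lemma bd_abs_le (t c : ℝ) (h : t ^ 2 ≤ c) : |t| ≤ c + 1 := by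
  have := sq_abs t
  nlinarith [sq_nonneg (|t| - 1)]

lemma bd_min_exists (S : BDSetup b Ω w N A) (hB : BDBlow Ω w N) (hne : Ω.Nonempty) :
    ∃ x' ∈ Ω, ∀ x ∈ Ω, w x' - (1/2) * ⟪x', N x'⟫ ≤ w x - (1/2) * ⟪x, N x⟫ := by
  obtain ⟨x₀, hx₀⟩ := hne
  have hcw := S.contw
  have hcN := S.contN
  set θ : E → ℝ := fun x => w x - (1/2) * ⟪x, N x⟫ with hθ
  set v : E → ℝ := fun x => ⟪N x, x⟫ - w x with hv
  set f : ℝ → E → ℝ := fun ε x => θ x + ε * (v x * v x + 4 * ‖x‖ ^ 2) + ε * ‖N x‖ ^ 2 with hf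
  set ψ : E → ℝ := fun x => (v x * v x + 4 * ‖x‖ ^ 2) + ‖N x‖ ^ 2 with hψ
  have hψ0 : ∀ x, 0 ≤ ψ x := fun x => by
    have := mul_self_nonneg (v x)
    positivity
  have hfψ : ∀ ε x, f ε x = θ x + ε * ψ x := fun ε x => by simp only [hf, hψ]; ring
  have hθ0 : ∀ x ∈ Ω, 0 ≤ θ x := fun x hx => bd_theta_pos S x hx
  have hcθ : ContinuousOn θ Ω := by fun_prop
  have hcf : ∀ ε, ContinuousOn (f ε) Ω := fun ε => by fun_prop
  set M := θ x₀ + 1 with hM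
  set C := 4 * √2 * M ^ 2 + 2 * √2 * n with hC
  have hs0 : 0 ≤ √2 := Real.sqrt_nonneg 2
  have hC0 : 0 ≤ C := by positivity
  have hM0 : 0 ≤ M := by have := hθ0 x₀ hx₀; linarith
  set K : ℝ → Set E := fun R => {x | x ∈ Ω ∧ θ x ≤ R ∧ |v x| ≤ R ∧ ‖x‖ ≤ R ∧ ‖N x‖ ≤ R} with hK
  have hKc : ∀ R, IsCompact (K R) := fun R => bd_compact S hB R
  have hKΩ : ∀ R, K R ⊆ Ω := fun R x hx => hx.1
  set ε₀ := 1 / (ψ x₀ + 1) with hε₀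
  have hε₀0 : 0 < ε₀ := by have := hψ0 x₀; positivity
  have step : ∀ ε, 0 < ε → ε ≤ ε₀ → ∃ xe ∈ K (M + C + 1), ∀ x ∈ Ω, θ xe ≤ θ x + ε * ψ x := by
    intro ε hε hεε
    have hF0 : 0 ≤ f ε x₀ := by
      rw [hfψ]; have := hθ0 x₀ hx₀; have := mul_nonneg hε.le (hψ0 x₀); linarith
    set R := f ε x₀ + f ε x₀ / ε + 1 with hR
    have hsub : ∀ x ∈ Ω, f ε x ≤ f ε x₀ → x ∈ K R := by
      intro x hx hle
      have h1 := hθ0 x hx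
      have h2 := hψ0 x
      rw [hfψ ε x] at hle
      have h3 : ψ x ≤ f ε x₀ / ε := by
        rw [le_div_iff₀ hε]; linarith
      have h4 : 0 ≤ f ε x₀ / ε := by positivity
      have h5 : ψ x = (v x * v x + 4 * ‖x‖ ^ 2) + ‖N x‖ ^ 2 := rfl
      have h6 := mul_self_nonneg (v x)
      have h7 := sq_nonneg ‖x‖
      have h8 := sq_nonneg ‖N x‖
      have h9 := mul_nonneg hε.le h2
      refine ⟨hx, by linarith, ?_, ?_, ?_⟩
      · have := bd_abs_le (v x) (f ε x₀ / ε) (by rw [pow_two]; linarith)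
        linarith
      · have := bd_abs_le ‖x‖ (f ε x₀ / ε) (by linarith)
        rw [abs_norm] at this
        linarith
      · have := bd_abs_le ‖N x‖ (f ε x₀ / ε) (by linarith)
        rw [abs_norm] at this
        linarith
    obtain ⟨xe, hxe, hmin⟩ := (hKc R).exists_isMinOn ⟨x₀, hsub x₀ hx₀ le_rfl⟩
      ((hcf ε).mono (hKΩ R))
    have hxΩ := hKΩ R hxe
    have hglob : ∀ x ∈ Ω, f ε xe ≤ f ε x := by
      intro x hx
      by_cases hle : f ε x ≤ f ε x₀
      · exact hmin (hsub x hx hle)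
      · exact (hmin (hsub x₀ hx₀ le_rfl)).trans (not_le.1 hle).le
    have hloc : IsLocalMin (f ε) xe := by
      filter_upwards [S.hΩ.mem_nhds hxΩ] with x hx using hglob x hx
    have hX := bd_lemmaX S xe hxΩ ε hε hloc
    have hθe : θ xe ≤ f ε xe := by
      rw [hfψ]; have := mul_nonneg hε.le (hψ0 xe); linarith
    have hθM : θ xe ≤ M := by
      have h1 := hglob x₀ hx₀
      rw [hfψ ε x₀] at h1
      have h2 : ε * ψ x₀ ≤ 1 := by
        have h3 : ε * (ψ x₀ + 1) ≤ 1 := by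
          have := hψ0 x₀
          rw [hε₀, le_div_iff₀ (by linarith)] at hεε
          exact hεε
        nlinarith
      linarith
    have hX' : 2 * (v xe) ^ 2 + ‖xe‖ ^ 2 + ‖N xe‖ ^ 2 ≤ C := by
      refine hX.trans ?_
      have : (θ xe) ^ 2 ≤ M ^ 2 := pow_le_pow_left₀ (hθ0 xe hxΩ) hθM 2
      have h2 := mul_le_mul_of_nonneg_left this (by positivity : 0 ≤ 4 * √2)
      change 4 * √2 * (θ xe) ^ 2 + 2 * √2 * n ≤ C
      simp only [hC]
      linarith
    have h6 := sq_nonneg (v xe)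
    have h7 := sq_nonneg ‖xe‖
    have h8 := sq_nonneg ‖N xe‖
    refine ⟨xe, ⟨hxΩ, by linarith, ?_, ?_, ?_⟩, fun x hx => ?_⟩
    · have := bd_abs_le (v xe) C (by linarith)
      linarith
    · have := bd_abs_le ‖xe‖ C (by linarith)
      rw [abs_norm] at this
      linarith
    · have := bd_abs_le ‖N xe‖ C (by linarith)
      rw [abs_norm] at this
      linarith
    · have := hglob x hx
      rw [hfψ ε x] at this
      linarith
  obtain ⟨xe, hxe, _⟩ := step ε₀ hε₀0 le_rfl
  obtain ⟨x', hx', hmin⟩ := (hKc (M + C + 1)).exists_isMinOn ⟨xe, hxe⟩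
    (hcθ.mono (hKΩ _))
  refine ⟨x', hKΩ _ hx', fun x hx => ?_⟩
  have hlim : Tendsto (fun ε : ℝ => θ x + ε * ψ x) (𝓝[>] 0) (𝓝 (θ x + 0 * ψ x)) := by
    refine Tendsto.mono_left ?_ nhdsWithin_le_nhds
    exact Continuous.tendsto (by fun_prop) 0
  have : θ x' ≤ θ x + 0 * ψ x := by
    refine ge_of_tendsto hlim ?_
    filter_upwards [Ioc_mem_nhdsGT hε₀0] with ε hε
    obtain ⟨xe, hxe, h⟩ := step ε hε.1 hε.2
    exact (hmin hxe).trans (h x hx)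
  rw [zero_mul, add_zero] at this
  exact this

lemma bd_strong (S : BDSetup b Ω w N A) (m : ℝ)
    (hm : ∀ x ∈ Ω, m ≤ w x - (1/2) * ⟪x, N x⟫) (x₁ : E) (hx₁ : x₁ ∈ Ω)
    (h₁ : w x₁ - (1/2) * ⟪x₁, N x₁⟫ = m) :
    ∀ᶠ x in 𝓝 x₁, w x - (1/2) * ⟪x, N x⟫ = m := by
  obtain ⟨U, X, B, hU, hyU, hc, hB, hX⟩ := bd_chart S x₁ hx₁
  obtain ⟨f1, f2, f3, f4⟩ := bd_chart_facts S hc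
  have hXx := hX.self_of_nhds
  have hXd : ∀ y ∈ U, HasFDerivAt X (B y) y := fun y hy => (hc y hy).2.2.1
  have hXc : ContinuousOn X U := fun y hy => (hXd y hy).continuousAt.continuousWithinAt
  set ϑ : E → ℝ := fun y => (1/2) * ⟪y, X y⟫ - (⟪y, X y⟫ - w (X y)) with hϑ
  have hvc : ContinuousOn (fun y => ⟪y, X y⟫ - w (X y)) U :=
    fun y hy => (f1 y hy).continuousAt.continuousWithinAt
  have hϑc : ContinuousOn ϑ U := by fun_prop
  have hϑX : ∀ y ∈ U, ϑ y = w (X y) - (1/2) * ⟪X y, N (X y)⟫ := by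
    intro y hy
    rw [(hc y hy).2.1, real_inner_comm y (X y)]
    simp only [hϑ]
    ring
  have hϑm : ∀ y ∈ U, m ≤ ϑ y := fun y hy => by
    rw [hϑX y hy]; exact hm _ (hc y hy).1
  set y₁ := N x₁ with hy₁
  have hϑ1 : ϑ y₁ = m := by rw [hϑX y₁ hyU, hXx, h₁]
  obtain ⟨ρ, hρ, hball⟩ := Metric.isOpen_iff.1 hU y₁ hyU
  set r := ρ / 4 with hr
  have hr0 : 0 < r := by positivity
  have claim : ∀ c ∈ Metric.ball y₁ r, ϑ c = m := by
    intro c hcb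
    have hcd : dist c y₁ < r := hcb
    have hcU : c ∈ U := hball (by rw [Metric.mem_ball]; linarith)
    by_contra hne
    have hgt : m < ϑ c := lt_of_le_of_ne (hϑm c hcU) (Ne.symm hne)
    set η := (ϑ c - m) / 2 with hη
    have hη0 : 0 < η := by simp only [hη]; linarith
    have hev : ∀ᶠ y in 𝓝 c, m + η < ϑ y := by
      refine (hϑc.continuousAt (hU.mem_nhds hcU)).eventually (lt_mem_nhds ?_)
      simp only [hη]; linarith
    obtain ⟨δ, hδ, hδb⟩ := Metric.nhds_basis_closedBall.eventually_iff.1 hev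
    have hsubU : Metric.closedBall c (2 * r) ⊆ U := by
      intro y hy
      refine hball ?_
      rw [Metric.mem_closedBall] at hy
      rw [Metric.mem_ball]
      have := dist_triangle y c y₁
      linarith
    -- choice of α
    have hs0 : 0 < √2 := by positivity
    obtain ⟨α, hα0, hα⟩ : ∃ α : ℝ, 0 < α ∧
        2 * √2 * n + (‖c‖ + 2 * r) * (2 * r) < 4 * √2 * α * δ ^ 2 := by
      have hD : 0 ≤ 2 * √2 * n + (‖c‖ + 2 * r) * (2 * r) := by positivity
      have hden : 0 < 4 * √2 * δ ^ 2 := by positivity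
      refine ⟨(2 * √2 * n + (‖c‖ + 2 * r) * (2 * r) + 1) / (4 * √2 * δ ^ 2), by positivity, ?_⟩
      have : 4 * √2 * ((2 * √2 * n + (‖c‖ + 2 * r) * (2 * r) + 1) / (4 * √2 * δ ^ 2)) * δ ^ 2
          = 2 * √2 * n + (‖c‖ + 2 * r) * (2 * r) + 1 := by field_simp
      rw [this]; linarith
    set h : E → ℝ := fun y => Real.exp (-α * ‖y - c‖ ^ 2) with hh
    set P : E → E := fun y => (-η) • ((-2 * α * h y) • (y - c)) with hP
    set Q : E → E →L[ℝ] E := fun y => (-η) • ((-2 * α * h y) • ContinuousLinearMap.id ℝ E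
      + (4 * α ^ 2 * h y) • (innerSL ℝ (y - c)).smulRight (y - c)) with hQ
    have hh' : ∀ y, HasFDerivAt h (innerSL ℝ ((-2 * α * h y) • (y - c))) y := by
      intro y
      have h0 : HasFDerivAt (fun z : E => z - c) (ContinuousLinearMap.id ℝ E) y :=
        (hasFDerivAt_id y).sub_const c
      refine ((h0.norm_sq.const_mul (-α)).exp).congr_fderiv ?_
      refine ContinuousLinearMap.ext fun x => ?_
      simp [inner_smul_left, hh]
      ring
    have hcY := fun y hy hmin => bd_lemmaY b hU f1 hXd hB f2 f4
      (Φ := fun y => (-η) * h y) (P := P) (Q := Q) (by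
        intro y _
        refine ((hh' y).const_mul (-η)).congr_fderiv ?_
        simp only [hP, map_smul]) (by
        intro y _
        have h0 : HasFDerivAt (fun z : E => z - c) (ContinuousLinearMap.id ℝ E) y :=
          (hasFDerivAt_id y).sub_const c
        refine ((((hh' y).const_mul (-2 * α)).smul h0).const_smul (-η)).congr_fderiv ?_
        refine ContinuousLinearMap.ext fun x => ?_
        simp only [hQ, _root_.smul_apply, _root_.add_apply,
          ContinuousLinearMap.smulRight_apply, innerSL_apply_apply, inner_smul_left, map_smul,
          smul_eq_mul, ContinuousLinearMap.id_apply, smul_smul]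
        congr 3
        ring) (by
        have hhc : Continuous h := by fun_prop
        have : Continuous fun y : E => (innerSL ℝ (y - c)).smulRight (y - c) := by fun_prop
        refine Continuous.continuousOn ?_
        fun_prop) 0 y hy hmin
    set g : E → ℝ := fun y => ϑ y + (-η) * h y with hg
    set Sset : Set E := Metric.closedBall c (2 * r) ∩ {y | δ ≤ ‖y - c‖} with hSs
    have hSc : IsCompact Sset := by
      refine (isCompact_closedBall c (2 * r)).inter_right ?_
      exact isClosed_le continuous_const (by fun_prop)
    have hy₁c : ‖y₁ - c‖ < r := by rw [← dist_eq_norm, dist_comm]; exact hcd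
    have hy₁S : y₁ ∈ Sset := by
      constructor
      · rw [Metric.mem_closedBall, dist_eq_norm]; linarith
      · by_contra hlt
        have hlt' : ‖y₁ - c‖ < δ := not_le.1 hlt
        have : y₁ ∈ Metric.closedBall c δ := by
          rw [Metric.mem_closedBall, dist_eq_norm]; exact hlt'.le
        have := hδb this
        linarith
    have hhc : Continuous h := by fun_prop
    have hgc : ContinuousOn g Sset := by
      have : ContinuousOn ϑ Sset := hϑc.mono (Set.inter_subset_left.trans hsubU)
      fun_prop
    obtain ⟨y₂, hy₂, hmin⟩ := hSc.exists_isMinOn ⟨y₁, hy₁S⟩ hgc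
    have hy₂U : y₂ ∈ U := hsubU hy₂.1
    have hle : g y₂ ≤ g y₁ := hmin hy₁S
    -- barrier value on the outer sphere
    have hout : Real.exp (-α * (2 * r) ^ 2) < h y₁ := by
      simp only [hh]
      refine Real.exp_lt_exp.2 ?_
      have : ‖y₁ - c‖ ^ 2 < (2 * r) ^ 2 := by
        have := norm_nonneg (y₁ - c)
        nlinarith
      nlinarith
    have hhle : ∀ y, h y ≤ 1 := fun y => by
      simp only [hh]
      refine Real.exp_le_one_iff.2 ?_
      have := mul_nonneg hα0.le (sq_nonneg ‖y - c‖)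
      linarith
    have hhpos : ∀ y, 0 < h y := fun y => Real.exp_pos _
    have hlt1 : δ < ‖y₂ - c‖ := by
      refine lt_of_le_of_ne hy₂.2 fun heq => ?_
      have : y₂ ∈ Metric.closedBall c δ := by
        rw [Metric.mem_closedBall, dist_eq_norm]; exact heq.symm.le
      have h3 : m + η < ϑ y₂ := hδb this
      have h4 := hhle y₂
      have h5 := hhpos y₁
      simp only [hg, hϑ1] at hle
      nlinarith
    have hlt2 : ‖y₂ - c‖ < 2 * r := by
      refine lt_of_le_of_ne (by simpa [dist_eq_norm] using hy₂.1) fun heq => ?_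
      have h3 := hϑm y₂ hy₂U
      have h4 : h y₂ = Real.exp (-α * (2 * r) ^ 2) := by simp only [hh, heq]
      simp only [hg, hϑ1, h4] at hle
      nlinarith
    have hSn : Sset ∈ 𝓝 y₂ := by
      refine inter_mem ?_ ?_
      · exact mem_of_superset (Metric.isOpen_ball.mem_nhds
          (by rw [Metric.mem_ball, dist_eq_norm]; exact hlt2)) Metric.ball_subset_closedBall
      · have : IsOpen {y : E | δ < ‖y - c‖} := isOpen_lt continuous_const (by fun_prop)
        exact mem_of_superset (this.mem_nhds hlt1) fun y (hy : δ < ‖y - c‖) =>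
          (show δ ≤ ‖y - c‖ from hy.le)
    have hlm : IsLocalMin g y₂ := hmin.isLocalMin hSn
    have hfin := hcY y₂ hy₂U (by simpa only [zero_mul, add_zero] using hlm)
    rw [zero_mul, zero_add] at hfin
    simp only [hQ, hP, bdTr_smul, bdTr_add, bdTr_id, bdTr_rank_one, inner_smul_right,
      real_inner_self_eq_norm_sq] at hfin
    have hnb : ‖y₂‖ ≤ ‖c‖ + 2 * r := by
      have := norm_add_le (y₂ - c) c
      rw [sub_add_cancel] at this
      linarith
    have hin : -((‖c‖ + 2 * r) * (2 * r)) ≤ ⟪y₂, y₂ - c⟫ := by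
      have h1 := abs_real_inner_le_norm y₂ (y₂ - c)
      have h2 : ‖y₂‖ * ‖y₂ - c‖ ≤ (‖c‖ + 2 * r) * (2 * r) :=
        mul_le_mul hnb hlt2.le (norm_nonneg _) (by positivity)
      have h3 := neg_abs_le ⟪y₂, y₂ - c⟫
      linarith
    have hd2 : δ ^ 2 ≤ ‖y₂ - c‖ ^ 2 := pow_le_pow_left₀ hδ.le hlt1.le 2
    have hd3 := mul_le_mul_of_nonneg_left hd2 (by positivity : 0 ≤ 4 * √2 * α)
    have hcoef : 0 < η * α * h y₂ := by have := hhpos y₂; positivity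
    have hneg : (η * α * h y₂) * (4 * √2 * α * ‖y₂ - c‖ ^ 2 - 2 * √2 * n + ⟪y₂, y₂ - c⟫) ≤ 0 := by
      linarith
    have hpos : 0 < 4 * √2 * α * ‖y₂ - c‖ ^ 2 - 2 * √2 * n + ⟪y₂, y₂ - c⟫ := by linarith
    have := mul_pos hcoef hpos
    linarith
  have hNc : ContinuousAt N x₁ := (S.hN x₁ hx₁).continuousAt
  have hb : ∀ᶠ x in 𝓝 x₁, N x ∈ Metric.ball y₁ r :=
    hNc.eventually (Metric.isOpen_ball.mem_nhds (Metric.mem_ball_self hr0))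
  filter_upwards [hX, hb] with x h1 h2
  have h3 := claim _ h2
  have h4 : N x ∈ U := hball (Metric.ball_subset_ball (by linarith) h2)
  rw [hϑX _ h4, h1] at h3
  exact h3
end glob

section glob2
variable {b : OrthonormalBasis (Fin n) ℝ E} {Ω : Set E} {w : E → ℝ} {N : E → E}
    {A : E → E →L[ℝ] E}

lemma bd_const (S : BDSetup b Ω w N A) (hB : BDBlow Ω w N) (hc : IsConnected Ω) :
    ∃ m, ∀ x ∈ Ω, w x - (1/2) * ⟪x, N x⟫ = m := by
  obtain ⟨x', hx', hmin⟩ := bd_min_exists S hB hc.nonempty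
  set m := w x' - (1/2) * ⟪x', N x'⟫ with hm
  have hcw := S.contw
  have hcN := S.contN
  have hcθ : ContinuousOn (fun x => w x - (1/2) * ⟪x, N x⟫) Ω := by fun_prop
  refine ⟨m, ?_⟩
  have h1 : IsOpen {x | x ∈ Ω ∧ w x - (1/2) * ⟪x, N x⟫ = m} := by
    rw [isOpen_iff_mem_nhds]
    rintro x ⟨hx, hxm⟩
    filter_upwards [S.hΩ.mem_nhds hx, bd_strong S m hmin x hx hxm] with y h2 h3
    exact ⟨h2, h3⟩
  have h2 : IsOpen {x | x ∈ Ω ∧ w x - (1/2) * ⟪x, N x⟫ ≠ m} := by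
    have := hcθ.isOpen_inter_preimage S.hΩ (isOpen_ne (x := m))
    exact this
  have h3 := hc.isPreconnected.subset_left_of_subset_union h1 h2 (by
    rw [Set.disjoint_left]
    rintro x ⟨_, h⟩ ⟨_, h'⟩
    exact h' h) (by
    intro x hx
    by_cases h : w x - (1/2) * ⟪x, N x⟫ = m
    · exact Or.inl ⟨hx, h⟩
    · exact Or.inr ⟨hx, h⟩) ⟨x', hx', hx', rfl⟩
  exact fun x hx => (h3 hx).2

lemma bd_homog (S : BDSetup b Ω w N A) (m : ℝ)
    (hm : ∀ x ∈ Ω, w x - (1/2) * ⟪x, N x⟫ = m) (x : E) (hx : x ∈ Ω) : A x x = N x := by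
  have h1 : HasFDerivAt (fun y => w y - (1/2) * ⟪y, N y⟫) _ x :=
    (S.hw x hx).sub (((hasFDerivAt_id x).inner ℝ (S.hN x hx)).const_mul (1/2))
  have h2 : HasFDerivAt (fun y => w y - (1/2) * ⟪y, N y⟫) (0 : E →L[ℝ] ℝ) x := by
    refine (hasFDerivAt_const m x).congr_of_eventuallyEq ?_
    filter_upwards [S.hΩ.mem_nhds hx] with y hy using hm y hy
  have h3 := h1.unique h2
  refine ext_inner_right ℝ fun p => ?_
  have h4 := congrArg (fun T : E →L[ℝ] ℝ => T p) h3
  simp at h4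
  have h5 := S.symm x hx x p
  have h6 := real_inner_comm p (N x)
  linarith

lemma bd_ray_eq (S : BDSetup b Ω w N A) (hA : ∀ x ∈ Ω, A x x = N x) (x₀ : E) (t : ℝ) (ht : 0 < t)
    (ht1 : t ≤ 1) (hseg : ∀ s ∈ Set.Icc t 1, s • x₀ ∈ Ω) : N (t • x₀) = t • N x₀ := by
  have hd : ∀ s ∈ Set.Icc t 1, HasDerivAt (fun s : ℝ => s⁻¹ • N (s • x₀)) 0 s := by
    intro s hs
    have hs0 : s ≠ 0 := (ht.trans_le hs.1).ne'
    have hsm : HasDerivAt (fun s : ℝ => s • x₀) x₀ s := by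
      simpa using (hasDerivAt_id s).smul_const x₀
    have hN := (S.hN _ (hseg s hs)).comp_hasDerivAt s hsm
    have := (hasDerivAt_inv hs0).smul hN
    refine this.congr_deriv ?_
    have hh := hA _ (hseg s hs)
    rw [map_smul] at hh
    simp only [Function.comp, ← hh, smul_smul]
    rw [← add_smul]
    have : s⁻¹ + -(s ^ 2)⁻¹ * s = 0 := by field_simp; ring
    rw [this, zero_smul]
  have := constant_of_has_deriv_right_zero
    (fun s hs => (hd s hs).continuousAt.continuousWithinAt)
    (fun s hs => (hd s ⟨hs.1, hs.2.le⟩).hasDerivWithinAt) 1 ⟨ht1, le_rfl⟩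
  simp only [inv_one, one_smul] at this
  rw [this, smul_smul, mul_inv_cancel₀ ht.ne', one_smul]

lemma bd_ray (S : BDSetup b Ω w N A) (hB : BDBlow Ω w N) (m : ℝ)
    (hm : ∀ x ∈ Ω, w x - (1/2) * ⟪x, N x⟫ = m) (x₀ : E) (hx₀ : x₀ ∈ Ω) :
    ∀ t ∈ Set.Icc (0:ℝ) 1, t • x₀ ∈ Ω := by
  have hA := bd_homog S m hm
  by_contra hcon
  push Not at hcon
  obtain ⟨t', ht', hbad⟩ := hcon
  have hcomp : IsCompact (Set.Icc (0:ℝ) 1 ∩ (fun t : ℝ => t • x₀) ⁻¹' Ωᶜ) := by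
    refine isCompact_Icc.inter_right ?_
    exact S.hΩ.isClosed_compl.preimage (by fun_prop)
  obtain ⟨t₀, ht₀, hgr⟩ := hcomp.exists_isGreatest ⟨t', ht', hbad⟩
  have hgood : ∀ s, t₀ < s → s ≤ 1 → s • x₀ ∈ Ω := by
    intro s h1 h2
    by_contra h3
    have := hgr ⟨⟨ht₀.1.1.trans h1.le, h2⟩, h3⟩
    linarith
  have hlt : t₀ < 1 := by
    refine lt_of_le_of_ne ht₀.1.2 fun h => ht₀.2 ?_
    simpa [h] using hx₀
  set τ : ℕ → ℝ := fun k => t₀ + (1 - t₀) * (1 / ((k:ℝ) + 1)) with hτ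
  have hτ1 : ∀ k, t₀ < τ k ∧ τ k ≤ 1 := by
    intro k
    have h1 : 0 < 1 / ((k:ℝ) + 1) := by positivity
    have h2 : 1 / ((k:ℝ) + 1) ≤ 1 := by
      rw [div_le_one (by positivity)]
      have : (0:ℝ) ≤ k := k.cast_nonneg
      linarith
    simp only [hτ]
    constructor <;> nlinarith
  have hτl : Tendsto τ atTop (𝓝 t₀) := by
    have := (tendsto_one_div_add_atTop_nhds_zero_nat (𝕜 := ℝ)).const_mul (1 - t₀)
    have := this.const_add t₀
    rw [mul_zero, add_zero] at this
    exact this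
  have hzl : Tendsto (fun k => τ k • x₀) atTop (𝓝 (t₀ • x₀)) := hτl.smul_const x₀
  have hzm : ∀ k, τ k • x₀ ∈ Ω := fun k => hgood _ (hτ1 k).1 (hτ1 k).2
  have hfr : t₀ • x₀ ∈ frontier Ω := by
    rw [frontier, S.hΩ.interior_eq]
    exact ⟨mem_closure_of_tendsto hzl (Eventually.of_forall hzm), ht₀.2⟩
  refine hB _ hfr _ hzm hzl (‖N x₀‖ + |m| + ‖x₀‖ * ‖N x₀‖) fun k => ?_
  have hk0 : 0 < τ k := ht₀.1.1.trans_lt (hτ1 k).1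
  have hk := bd_ray_eq S hA x₀ (τ k) hk0 (hτ1 k).2
    (fun s hs => hgood s ((hτ1 k).1.trans_le hs.1) hs.2)
  have hw := hm _ (hzm k)
  rw [hk] at hw ⊢
  rw [real_inner_smul_left, real_inner_smul_right] at hw
  have h1 : ‖τ k • N x₀‖ ≤ ‖N x₀‖ := by
    rw [norm_smul, Real.norm_eq_abs, abs_of_pos hk0]
    exact mul_le_of_le_one_left (norm_nonneg _) (hτ1 k).2
  have h2 := abs_nonneg m
  have h3 : 0 ≤ ‖x₀‖ * ‖N x₀‖ := by positivity
  refine ⟨by linarith, ?_⟩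
  have h4 : w (τ k • x₀) = m + (1/2) * (τ k * (τ k * ⟪x₀, N x₀⟫)) := by linarith
  have h5 := abs_real_inner_le_norm x₀ (N x₀)
  have h6 : |τ k * (τ k * ⟪x₀, N x₀⟫)| ≤ ‖x₀‖ * ‖N x₀‖ := by
    rw [abs_mul, abs_mul, abs_of_pos hk0]
    have h7 := abs_nonneg ⟪x₀, N x₀⟫
    have h8 := mul_le_of_le_one_left h7 (hτ1 k).2
    have h9 := mul_le_of_le_one_left (mul_nonneg hk0.le h7) (hτ1 k).2
    linarith
  rw [h4]
  have h10 := abs_add_le m ((1/2) * (τ k * (τ k * ⟪x₀, N x₀⟫)))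
  rw [abs_mul (1/2), abs_of_pos (by norm_num : (0:ℝ) < 1/2)] at h10
  have := norm_nonneg (N x₀)
  linarith

lemma bd_core (S : BDSetup b Ω w N A) (hB : BDBlow Ω w N) (hc : IsConnected Ω) :
    Ω = Set.univ ∧ ∃ m : ℝ, ∀ x, w x = m + (1/2) * ⟪x, A 0 x⟫ := by
  obtain ⟨m, hm⟩ := bd_const S hB hc
  have hA := bd_homog S m hm
  have hr := bd_ray S hB m hm
  obtain ⟨x', hx'⟩ := hc.nonempty
  have h0 : (0:E) ∈ Ω := by simpa using hr x' hx' 0 ⟨le_rfl, zero_le_one⟩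
  have hN0 : N 0 = 0 := by rw [← hA 0 h0, map_zero]
  have hNx : ∀ x ∈ Ω, N x = A 0 x := by
    intro x hx
    have hsm : HasDerivAt (fun s : ℝ => s • x) x 0 := by
      simpa using (hasDerivAt_id (0:ℝ)).smul_const x
    have h1 : HasDerivAt (fun s : ℝ => N (s • x)) (A 0 x) 0 := by
      have h00 := S.hN 0 h0
      rw [← zero_smul ℝ x] at h00
      have := h00.comp_hasDerivAt (0:ℝ) hsm
      rwa [zero_smul] at this
    have h2 : HasDerivWithinAt (fun s : ℝ => N (s • x)) (N x) (Set.Icc 0 1) 0 := by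
      have h3 : HasDerivAt (fun s : ℝ => s • N x) (N x) 0 := by
        simpa using (hasDerivAt_id (0:ℝ)).smul_const (N x)
      refine h3.hasDerivWithinAt.congr ?_ (by simp [hN0])
      intro s hs
      rcases eq_or_lt_of_le hs.1 with h | h
      · simp [← h, hN0]
      · exact bd_ray_eq S hA x s h hs.2 fun q hq => hr x hx q ⟨h.le.trans hq.1, hq.2⟩
    have hu : UniqueDiffWithinAt ℝ (Set.Icc (0:ℝ) 1) 0 :=
      uniqueDiffOn_Icc one_pos 0 ⟨le_rfl, zero_le_one⟩
    exact hu.eq_deriv _ h2 h1.hasDerivWithinAt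
  have hwx : ∀ x ∈ Ω, w x = m + (1/2) * ⟪x, A 0 x⟫ := by
    intro x hx
    have := hm x hx
    rw [hNx x hx] at this
    linarith
  have hfr : frontier Ω = ∅ := by
    rw [Set.eq_empty_iff_forall_notMem]
    intro p hp
    obtain ⟨z, hz, hzp⟩ := mem_closure_iff_seq_limit.1 (frontier_subset_closure hp)
    have hb1 : Tendsto (fun k => ‖A 0 (z k)‖) atTop (𝓝 ‖A 0 p‖) :=
      (((A 0).continuous.tendsto p).comp hzp).norm
    have hb2 : Tendsto (fun k => |m + (1/2) * ⟪z k, A 0 (z k)⟫|) atTop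
        (𝓝 |m + (1/2) * ⟪p, A 0 p⟫|) :=
      (((hzp.inner (((A 0).continuous.tendsto p).comp hzp)).const_mul _).const_add m).abs
    obtain ⟨R1, hR1⟩ := hb1.bddAbove_range
    obtain ⟨R2, hR2⟩ := hb2.bddAbove_range
    refine hB p hp z hz hzp (max R1 R2) fun k => ?_
    rw [hNx _ (hz k), hwx _ (hz k)]
    exact ⟨(hR1 ⟨k, rfl⟩).trans (le_max_left _ _), (hR2 ⟨k, rfl⟩).trans (le_max_right _ _)⟩
  have hU : Ω = Set.univ :=
    (isClopen_iff_frontier_eq_empty.2 hfr).eq_univ hc.nonempty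
  refine ⟨hU, m, fun x => hwx x (by rw [hU]; trivial)⟩
end glob2

section bridge
variable {Ω : Set (EuclideanSpace ℝ (Fin n))} {u : EuclideanSpace ℝ (Fin n) → ℝ}

/-- The Riesz isomorphism, as a linear map. -/
def bdJ (n : ℕ) : StrongDual ℝ (EuclideanSpace ℝ (Fin n)) →L[ℝ] EuclideanSpace ℝ (Fin n) :=
  LinearMap.toContinuousLinearMap
    { toFun := fun l => (InnerProductSpace.toDual ℝ (EuclideanSpace ℝ (Fin n))).symm l
      map_add' := fun l k => map_add _ l k
      map_smul' := fun c l => by simp }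

/-- The second derivative of `u` as an operator. -/
def bdD (n : ℕ) (u : EuclideanSpace ℝ (Fin n) → ℝ) (x : EuclideanSpace ℝ (Fin n)) :
    EuclideanSpace ℝ (Fin n) →L[ℝ] EuclideanSpace ℝ (Fin n) :=
  (bdJ n).comp (fderiv ℝ (fderiv ℝ u) x)

lemma bdD_inner (x p q : EuclideanSpace ℝ (Fin n)) :
    ⟪bdD n u x p, q⟫ = fderiv ℝ (fderiv ℝ u) x p q := by
  simp only [bdD, ContinuousLinearMap.comp_apply]
  exact InnerProductSpace.toDual_symm_apply (𝕜 := ℝ) (x := q)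
    (y := fderiv ℝ (fderiv ℝ u) x p)

lemma bd_grad (hΩ : IsOpen Ω) (hu : ContDiffOn ℝ 2 u Ω) (x : EuclideanSpace ℝ (Fin n))
    (hx : x ∈ Ω) : HasFDerivAt (gradient u) (bdD n u x) x := by
  have h1 : ContDiffOn ℝ 1 (fderiv ℝ u) Ω := hu.fderiv_of_isOpen hΩ (by norm_num)
  have h2 : HasFDerivAt (fderiv ℝ u) (fderiv ℝ (fderiv ℝ u) x) x :=
    ((h1.differentiableOn (by norm_num)).differentiableAt (hΩ.mem_nhds hx)).hasFDerivAt
  exact (bdJ n).hasFDerivAt.comp x h2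

lemma bdD_cont (hΩ : IsOpen Ω) (hu : ContDiffOn ℝ 2 u Ω) : ContinuousOn (bdD n u) Ω := by
  have h1 : ContDiffOn ℝ 1 (fderiv ℝ u) Ω := hu.fderiv_of_isOpen hΩ (by norm_num)
  have h2 := h1.continuousOn_fderiv_of_isOpen hΩ le_rfl
  unfold bdD
  exact continuousOn_const.clm_comp h2

lemma bdD_symm (hΩ : IsOpen Ω) (hu : ContDiffOn ℝ 2 u Ω) (x : EuclideanSpace ℝ (Fin n))
    (hx : x ∈ Ω) (p q : EuclideanSpace ℝ (Fin n)) : ⟪bdD n u x p, q⟫ = ⟪p, bdD n u x q⟫ := by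
  rw [real_inner_comm _ p, bdD_inner, bdD_inner]
  have h1 : ContDiffAt ℝ 2 u x := hu.contDiffAt (hΩ.mem_nhds hx)
  exact h1.isSymmSndFDerivAt (by simp) p q

lemma bd_hess (x : EuclideanSpace ℝ (Fin n)) (i j : Fin n) :
    Hess n u x i j = ⟪bdD n u x (EuclideanSpace.single i 1), EuclideanSpace.single j 1⟫ := by
  rw [bdD_inner, Hess, Matrix.of_apply, iteratedFDeriv_two_apply]
  simp

lemma bd_hess_mulVec (hΩ : IsOpen Ω) (hu : ContDiffOn ℝ 2 u Ω) (x : EuclideanSpace ℝ (Fin n))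
    (hx : x ∈ Ω) (p : EuclideanSpace ℝ (Fin n)) :
    Hess n u x *ᵥ p.ofLp = (bdD n u x p).ofLp := by
  funext i
  have hp : p = ∑ j, p j • EuclideanSpace.single j (1:ℝ) := by
    have := (EuclideanSpace.basisFun (Fin n) ℝ).sum_repr p
    simpa using this.symm
  have h1 : (bdD n u x p).ofLp i = ⟪bdD n u x (EuclideanSpace.single i 1), p⟫ := by
    rw [bdD_symm hΩ hu x hx, EuclideanSpace.inner_single_left]
    simp
  rw [h1]
  conv_rhs => rw [hp]
  rw [inner_sum]
  simp only [Matrix.mulVec, dotProduct, bd_hess, real_inner_smul_right]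
  exact Finset.sum_congr rfl fun j _ => mul_comm _ _

lemma bd_hess_herm (hΩ : IsOpen Ω) (hu : ContDiffOn ℝ 2 u Ω) (x : EuclideanSpace ℝ (Fin n))
    (hx : x ∈ Ω) : (Hess n u x).IsHermitian := by
  refine Matrix.IsHermitian.ext fun i j => ?_
  rw [bd_hess, bd_hess, bdD_symm hΩ hu x hx, real_inner_comm]
  simp

lemma bd_final (σ : ℝ) (hσ : σ * σ = 1) (hΩ : IsOpen Ω) (hc : IsConnected Ω)
    (hu : ContDiffOn ℝ 2 u Ω)
    (heq : ∀ x ∈ Ω, -Real.sqrt 2 * ∑ i, 1 / (1 + eigs (Hess n u x) i)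
      = -u x + (1/2) * ⟪x, gradient u x⟫)
    (hadm : ∀ x ∈ Ω, (σ • (Hess n u x + 1)).PosDef)
    (hblow :
      (∀ p ∈ frontier Ω, ∀ z : ℕ → EuclideanSpace ℝ (Fin n), (∀ k, z k ∈ Ω) →
        Tendsto z atTop (nhds p) → Tendsto (fun k => ‖gradient u (z k)‖) atTop atTop) ∨
      (∀ p ∈ frontier Ω, ∀ z : ℕ → EuclideanSpace ℝ (Fin n), (∀ k, z k ∈ Ω) →
        Tendsto z atTop (nhds p) → Tendsto (fun k => |u (z k)|) atTop atTop)) :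
    Ω = Set.univ ∧ IsQuadPoly n u := by
  have hpos : ∀ x ∈ Ω, ∀ p : EuclideanSpace ℝ (Fin n), p ≠ 0 →
      0 < ⟪(σ • (bdD n u x + ContinuousLinearMap.id ℝ (EuclideanSpace ℝ (Fin n))) :
          EuclideanSpace ℝ (Fin n) →L[ℝ] EuclideanSpace ℝ (Fin n)) p, p⟫ := by
    intro x hx p hp
    have hp' : p.ofLp ≠ 0 := fun h => hp ((WithLp.ofLp_eq_zero 2).1 h)
    have h1 := (hadm x hx).dotProduct_mulVec_pos hp'
    rw [Matrix.smul_mulVec, Matrix.add_mulVec, Matrix.one_mulVec, bd_hess_mulVec hΩ hu x hx] at h1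
    exact h1
  have habs : |σ| = 1 := by
    have : |σ| * |σ| = 1 := by rw [← abs_mul, hσ, abs_one]
    have h0 := abs_nonneg σ
    nlinarith
  have S : BDSetup (EuclideanSpace.basisFun (Fin n) ℝ) Ω (fun x => σ * (u x + (1/2) * ‖x‖ ^ 2))
      (fun x => σ • (gradient u x + x))
      (fun x => σ • (bdD n u x + ContinuousLinearMap.id ℝ (EuclideanSpace ℝ (Fin n)))) := by
    refine ⟨hΩ, ?_, ?_, ?_, ?_, hpos, ?_⟩
    · intro x hx
      have h1 : HasGradientAt u (gradient u x) x :=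
        ((hu.differentiableOn (by norm_num)).differentiableAt (hΩ.mem_nhds hx)).hasGradientAt
      have h2 : HasFDerivAt (fun x : EuclideanSpace ℝ (Fin n) => ‖x‖ ^ 2) _ x :=
        (hasFDerivAt_id x).norm_sq
      refine ((h1.hasFDerivAt.add (h2.const_mul (1/2))).const_mul σ).congr_fderiv ?_
      refine ContinuousLinearMap.ext fun p => ?_
      simp [inner_add_left, inner_smul_left]
    · intro x hx
      exact ((bd_grad hΩ hu x hx).add (hasFDerivAt_id x)).const_smul σ
    · exact ((bdD_cont hΩ hu).add continuousOn_const).const_smul σ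
    · intro x hx p q
      have := bdD_symm hΩ hu x hx p q
      simp [inner_add_left, inner_add_right, inner_smul_left, inner_smul_right, this]
    · intro x hx B hB
      have hH := bd_hess_herm hΩ hu x hx
      have he : eigs (Hess n u x) = hH.eigenvalues := by simp only [eigs, dif_pos hH]
      set v := hH.eigenvectorBasis with hv
      have h1 : ∀ i, bdD n u x (v i) = hH.eigenvalues i • v i := by
        intro i
        have := hH.mulVec_eigenvectorBasis i
        rw [bd_hess_mulVec hΩ hu x hx] at this
        exact WithLp.ofLp_injective 2 this
      have h2 : ∀ i, (σ • (bdD n u x + ContinuousLinearMap.id ℝ (EuclideanSpace ℝ (Fin n))) :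
          EuclideanSpace ℝ (Fin n) →L[ℝ] EuclideanSpace ℝ (Fin n)) (v i)
          = (σ * (1 + hH.eigenvalues i)) • v i := by
        intro i
        simp only [_root_.smul_apply, _root_.add_apply, ContinuousLinearMap.id_apply, h1]
        rw [mul_smul, add_smul, one_smul, add_comm]
      have h3 : ∀ i, ⟪v i, v i⟫ = 1 := fun i => by
        rw [real_inner_self_eq_norm_sq, v.norm_eq_one]; norm_num
      have h4 : ∀ i, 0 < σ * (1 + hH.eigenvalues i) := by
        intro i
        have hne : v i ≠ 0 := fun h => by have := h3 i; simp [h] at this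
        have := hpos x hx (v i) hne
        rwa [h2, inner_smul_left, h3, mul_one] at this
      have hinj : ∀ p q, (σ • (bdD n u x + ContinuousLinearMap.id ℝ (EuclideanSpace ℝ (Fin n))) :
          EuclideanSpace ℝ (Fin n) →L[ℝ] EuclideanSpace ℝ (Fin n)) p
          = (σ • (bdD n u x + ContinuousLinearMap.id ℝ (EuclideanSpace ℝ (Fin n))) :
          EuclideanSpace ℝ (Fin n) →L[ℝ] EuclideanSpace ℝ (Fin n)) q → p = q := by
        intro p q h
        by_contra hne
        have := hpos x hx (p - q) (sub_ne_zero.2 hne)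
        rw [map_sub, h, sub_self, inner_zero_left] at this
        exact lt_irrefl _ this
      have h5 : ∀ i, B (v i) = (σ * (1 + hH.eigenvalues i))⁻¹ • v i := by
        intro i
        refine hinj _ _ ?_
        rw [hB, map_smul, h2, smul_smul, inv_mul_cancel₀ (h4 i).ne', one_smul]
      have h6 : bdTr (EuclideanSpace.basisFun (Fin n) ℝ) B
          = ∑ i, (σ * (1 + hH.eigenvalues i))⁻¹ := by
        have e1 := LinearMap.trace_eq_sum_inner (B : EuclideanSpace ℝ (Fin n) →ₗ[ℝ] _)
          (EuclideanSpace.basisFun (Fin n) ℝ)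
        have e2 := LinearMap.trace_eq_sum_inner (B : EuclideanSpace ℝ (Fin n) →ₗ[ℝ] _) v
        rw [e1] at e2
        rw [bdTr]
        simp only [real_inner_comm] at e2 ⊢
        refine e2.trans (Finset.sum_congr rfl fun i _ => ?_)
        rw [ContinuousLinearMap.coe_coe, h5, inner_smul_right, h3, mul_one]
      have h7 : ∑ i, (σ * (1 + hH.eigenvalues i))⁻¹ = σ * ∑ i, 1 / (1 + hH.eigenvalues i) := by
        rw [Finset.mul_sum]
        refine Finset.sum_congr rfl fun i _ => ?_
        rw [mul_inv, one_div, inv_eq_of_mul_eq_one_right hσ]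
      have h8 := heq x hx
      rw [he] at h8
      rw [h6, h7]
      simp only [inner_smul_right, inner_add_right, real_inner_self_eq_norm_sq]
      linear_combination σ * h8
  have hB : BDBlow Ω (fun x => σ * (u x + (1/2) * ‖x‖ ^ 2)) (fun x => σ • (gradient u x + x)) := by
    intro p hp z hz hzp R hR
    obtain ⟨r, hr⟩ := hzp.norm.bddAbove_range
    have hr' : ∀ k, ‖z k‖ ≤ r := fun k => hr ⟨k, rfl⟩
    rcases hblow with h | h
    · obtain ⟨k, hk⟩ := ((h p hp z hz hzp).eventually_gt_atTop (R + r)).exists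
      have h1 := (hR k).1
      simp only [norm_smul, Real.norm_eq_abs, habs, one_mul] at h1
      have h2 := norm_sub_le (gradient u (z k) + z k) (z k)
      rw [add_sub_cancel_right] at h2
      have := hr' k
      linarith
    · obtain ⟨k, hk⟩ := ((h p hp z hz hzp).eventually_gt_atTop (R + r ^ 2)).exists
      have h1 := (hR k).2
      simp only [abs_mul σ, habs, one_mul] at h1
      have h2 : ‖z k‖ ^ 2 ≤ r ^ 2 := pow_le_pow_left₀ (norm_nonneg _) (hr' k) 2
      have h3 := sq_nonneg ‖z k‖
      rw [abs_le] at h1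
      have h4 : |u (z k)| ≤ R + r ^ 2 := by
        rw [abs_le]
        constructor <;> linarith [h1.1, h1.2]
      linarith
  obtain ⟨hU, m, hm⟩ := bd_core S hB hc
  refine ⟨hU, Hess n u 0, 0, σ * m, ?_, fun x => ?_⟩
  · have := bd_hess_herm hΩ hu 0 (by rw [hU]; trivial)
    rw [Matrix.IsHermitian, Matrix.conjTranspose_eq_transpose_of_trivial] at this
    exact this
  · have h1 := hm x
    have h2 := bd_hess_mulVec hΩ hu 0 (by rw [hU]; trivial) x
    have h3 : ∑ i, ∑ j, Hess n u 0 i j * x i * x j = ⟪x, bdD n u 0 x⟫ := by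
      rw [PiLp.inner_apply]
      refine Finset.sum_congr rfl fun i _ => ?_
      have h4 := congrFun h2 i
      rw [← h4]
      simp only [Matrix.mulVec, dotProduct]
      simp [Finset.sum_mul]
      refine Finset.sum_congr rfl fun j _ => ?_
      ring
    rw [h3, inner_zero_left]
    simp only [_root_.smul_apply, _root_.add_apply, ContinuousLinearMap.id_apply,
      inner_smul_right, inner_add_right, real_inner_self_eq_norm_sq] at h1
    linear_combination σ * h1 - (u x - (1/2) * ⟪x, bdD n u 0 x⟫) * hσ
end bridge

end BD

theorem bernstein_domain_tau_pi_div_four (n : ℕ) (hn : 1 ≤ n)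
    (Ω : Set (EuclideanSpace ℝ (Fin n))) (hΩo : IsOpen Ω) (hΩc : IsConnected Ω)
    (u : EuclideanSpace ℝ (Fin n) → ℝ)
    (hu : ContDiffOn ℝ 2 u Ω)
    (heq : ∀ x ∈ Ω, -Real.sqrt 2 * ∑ i, 1 / (1 + eigs (Hess n u x) i)
      = -u x + (1/2) * ⟪x, gradient u x⟫)
    (hadm : (∀ x ∈ Ω, (Hess n u x + 1).PosDef) ∨
      (∀ x ∈ Ω, (-(1 : Matrix (Fin n) (Fin n) ℝ) - Hess n u x).PosDef))
    (hblow :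
      (∀ p ∈ frontier Ω, ∀ z : ℕ → EuclideanSpace ℝ (Fin n), (∀ k, z k ∈ Ω) →
        Tendsto z atTop (nhds p) → Tendsto (fun k => ‖gradient u (z k)‖) atTop atTop) ∨
      (∀ p ∈ frontier Ω, ∀ z : ℕ → EuclideanSpace ℝ (Fin n), (∀ k, z k ∈ Ω) →
        Tendsto z atTop (nhds p) → Tendsto (fun k => |u (z k)|) atTop atTop)) :
    Ω = Set.univ ∧ IsQuadPoly n u := by
  rcases hadm with h | h
  · refine bd_final 1 (by norm_num) hΩo hΩc hu heq (fun x hx => ?_) hblow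
    rw [one_smul]
    exact h x hx
  · refine bd_final (-1) (by norm_num) hΩo hΩc hu heq (fun x hx => ?_) hblow
    have h1 : (-1 : ℝ) • (Hess n u x + 1) = -(1 : Matrix (Fin n) (Fin n) ℝ) - Hess n u x := by
      rw [neg_one_smul]
      abel
    rw [h1]
    exact h x hx
end
end
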